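/- arXiv:2012.12798 — 5 statements merged into one kernel-verified Lean document; each statement's English description precedes it below -/
import Mathlib

section
/- Finite majority rule: Let A be a finite nonempty set, let B be a measurable space equipped with a probability measure μ, and let M : A × B → {0,1} be such that for every a ∈ A the set {b ∈ B : M[a,b] = 1} is measurable and μ{b ∈ B : M[a,b] = 1} ≥ 2/3. Then (i) for every integer m ≥ 1 with m > 27·ln|A| there exist (not necessarily distinct) elements b_1,…,b_m ∈ B such that for every a ∈ A strictly more than m/2 of the indices i ∈ {1,…,m} satisfy M[a,b_i] = 1; and (ii) there exists b ∈ B such that M[a,b] = 1 holds for strictly more than |A|/2 of the elements a ∈ A. -/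
/-!
Both parts come from one averaging fact (`exists_column_weight`): for nonnegative weights `w` on
the rows, the expected total weight of the rows having a one in a random column is at least `2/3`
of the whole weight, so some column attains this.

Part (ii) is the case of unit weights. For part (i) the columns are chosen greedily (a
derandomized Chernoff bound). Give each row the weight `2 ^ z`, where `z` is the number of zeros it
has in the columns chosen so far. A column capturing `2/3` of the weight increases the total by a
factor of at most `1 + 1/3`, so after `m` steps the total is at most `|A| (4/3)^m`. A row without a
strict majority of ones has `2 z ≥ m`, hence squared weight at least `2^m`, which would give
`(9/8)^m ≤ |A|^2`. This contradicts `27 ln |A| < m`, because `ln (9/8) ≥ 1/9 > 2/27`.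
-/

open MeasureTheory

/-- Some column has ones in rows carrying at least `2/3` of any given nonnegative weight. -/
lemma exists_column_weight {A B : Type} [Fintype A] [MeasurableSpace B]
    (μ : Measure B) [IsProbabilityMeasure μ] (M : A → B → Bool)
    (hmeas : ∀ a : A, MeasurableSet {b : B | M a b = true})
    (hdense : ∀ a : A, 2 / 3 ≤ μ {b : B | M a b = true})
    (w : A → ℝ) (hw : ∀ a, 0 ≤ w a) :
    ∃ b : B, 2 / 3 * ∑ a, w a ≤ ∑ a, if M a b = true then w a else 0 := by
  have heq : ∀ a, (fun b => if M a b = true then w a else 0) =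
      Set.indicator {b : B | M a b = true} (fun _ => w a) := by
    intro a
    ext b
    simp [Set.indicator_apply]
  have hint : ∀ a, Integrable (fun b => if M a b = true then w a else 0) μ := by
    intro a
    rw [heq]
    exact (integrable_const _).indicator (hmeas a)
  obtain ⟨b, hb⟩ := exists_integral_le (μ := μ)
    (f := fun b => ∑ a, if M a b = true then w a else 0)
    (integrable_finsetSum _ fun a _ => hint a)
  refine ⟨b, le_trans ?_ hb⟩
  rw [integral_finsetSum _ fun a _ => hint a, Finset.mul_sum]
  refine Finset.sum_le_sum fun a _ => ?_
  have hreal : (2 / 3 : ℝ) ≤ μ.real {b : B | M a b = true} := by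
    have h := ENNReal.toReal_mono (measure_ne_top μ _) (hdense a)
    simpa [Measure.real] using h
  rw [heq, integral_indicator_const _ (hmeas a), smul_eq_mul]
  exact mul_le_mul_of_nonneg_right hreal (hw a)

/-- Greedy choice of columns: each product is `2` to the number of zeros of the row `a` among the
chosen columns, and each new column multiplies the total weight by at most `4/3`. -/
lemma exists_columns_potential {A B : Type} [Fintype A] [MeasurableSpace B]
    (μ : Measure B) [IsProbabilityMeasure μ] (M : A → B → Bool)
    (hmeas : ∀ a : A, MeasurableSet {b : B | M a b = true})
    (hdense : ∀ a : A, 2 / 3 ≤ μ {b : B | M a b = true}) (m : ℕ) :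
    ∃ b : Fin m → B, ∑ a, ∏ i, (if M a (b i) = true then (1 : ℝ) else 2) ≤
      Fintype.card A * (4 / 3) ^ m := by
  induction m with
  | zero => exact ⟨Fin.elim0, by simp⟩
  | succ m ih =>
    obtain ⟨b, hb⟩ := ih
    obtain ⟨c, hc⟩ := exists_column_weight μ M hmeas hdense
      (fun a => ∏ i, (if M a (b i) = true then (1 : ℝ) else 2))
      (fun a => Finset.prod_nonneg fun i _ => by split_ifs <;> norm_num)
    refine ⟨Fin.cons c b, ?_⟩
    have hstep : ∑ a, ∏ i, (if M a ((Fin.cons c b : Fin (m + 1) → B) i) = true then (1 : ℝ) else 2)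
        = 2 * ∑ a, ∏ i, (if M a (b i) = true then (1 : ℝ) else 2) -
          ∑ a, if M a c = true then ∏ i, (if M a (b i) = true then (1 : ℝ) else 2) else 0 := by
      rw [Finset.mul_sum, ← Finset.sum_sub_distrib]
      refine Finset.sum_congr rfl fun a _ => ?_
      simp only [Fin.prod_univ_succ, Fin.cons_zero, Fin.cons_succ]
      split_ifs <;> ring
    rw [hstep, pow_succ]
    linarith

/-- **Finite majority rule.** If `A` is a finite nonempty set, `B` carries a probability
measure `μ`, and `M : A × B → {0,1}` (encoded as `Bool`) satisfies that each set
`{b : M[a,b] = 1}` is measurable of measure at least `2/3`, then (i) for every integer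
`m ≥ 1` with `m > 27·ln|A|` there are columns `b₁,…,b_m` such that every row has strictly
more than `m/2` ones among these columns, and (ii) some column has strictly more than
`|A|/2` ones. -/
theorem finite_majority_rule
    {A : Type} [Fintype A] [Nonempty A]
    {B : Type} [MeasurableSpace B]
    (μ : Measure B) [IsProbabilityMeasure μ]
    (M : A → B → Bool)
    (hmeas : ∀ a : A, MeasurableSet {b : B | M a b = true})
    (hdense : ∀ a : A, 2 / 3 ≤ μ {b : B | M a b = true}) :
    (∀ m : ℕ, 1 ≤ m → 27 * Real.log (Fintype.card A) < (m : ℝ) →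
      ∃ b : Fin m → B, ∀ a : A,
        m < 2 * Set.ncard {i : Fin m | M a (b i) = true}) ∧
    (∃ b : B, Fintype.card A < 2 * Set.ncard {a : A | M a b = true}) := by
  classical
  constructor
  · intro m hm hlog
    obtain ⟨b, hb⟩ := exists_columns_potential μ M hmeas hdense m
    refine ⟨b, fun a => ?_⟩
    by_contra hbad
    have hones : Set.ncard {i : Fin m | M a (b i) = true} =
        (Finset.univ.filter fun i : Fin m => M a (b i) = true).card := by
      rw [← Set.ncard_coe_finset]
      simp
    have hsplit := Finset.card_filter_add_card_filter_not (s := (Finset.univ : Finset (Fin m)))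
      (fun i => M a (b i) = true)
    rw [Finset.card_univ, Fintype.card_fin] at hsplit
    set z := (Finset.univ.filter fun i : Fin m => ¬ M a (b i) = true).card with hz
    have hzm : m ≤ 2 * z := by omega
    have hprod : ∏ i, (if M a (b i) = true then (1 : ℝ) else 2) = 2 ^ z := by
      rw [Finset.prod_ite]
      simp [hz]
    have hweight : (2 : ℝ) ^ z ≤ Fintype.card A * (4 / 3) ^ m := by
      rw [← hprod]
      refine le_trans ?_ hb
      exact Finset.single_le_sum
        (f := fun a => ∏ i, (if M a (b i) = true then (1 : ℝ) else 2))
        (fun a _ => Finset.prod_nonneg fun i _ => by split_ifs <;> norm_num)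
        (Finset.mem_univ a)
    have hsq : (2 : ℝ) ^ m ≤ (Fintype.card A * (4 / 3) ^ m) ^ 2 :=
      calc (2 : ℝ) ^ m ≤ 2 ^ (2 * z) := pow_le_pow_right₀ (by norm_num) hzm
        _ = (2 ^ z) ^ 2 := by rw [mul_comm, pow_mul]
        _ ≤ _ := pow_le_pow_left₀ (by positivity) hweight 2
    have hcard : (0 : ℝ) < Fintype.card A := by exact_mod_cast Fintype.card_pos
    have hlogs := Real.log_le_log (by positivity) hsq
    rw [Real.log_pow, Real.log_pow, Real.log_mul hcard.ne' (by positivity), Real.log_pow] at hlogs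
    have h98 : (1 : ℝ) / 9 ≤ Real.log 2 - 2 * Real.log (4 / 3) := by
      have h := Real.one_sub_inv_le_log_of_pos (show (0 : ℝ) < 9 / 8 by norm_num)
      have heq : Real.log (9 / 8) = Real.log 2 - 2 * Real.log (4 / 3) := by
        rw [show (9 / 8 : ℝ) = 2 / (4 / 3) ^ 2 by norm_num,
          Real.log_div (by norm_num) (by norm_num), Real.log_pow]
        norm_num
      rw [← heq]
      norm_num at h ⊢
      linarith
    have hm' : (1 : ℝ) ≤ m := by exact_mod_cast hm
    have hmul := mul_le_mul_of_nonneg_left h98 (show (0 : ℝ) ≤ m by linarith)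
    push_cast at hlogs
    nlinarith
  · obtain ⟨b, hb⟩ := exists_column_weight μ M hmeas hdense (fun _ => 1) (fun _ => zero_le_one)
    refine ⟨b, ?_⟩
    have hones : Set.ncard {a : A | M a b = true} =
        (Finset.univ.filter fun a : A => M a b = true).card := by
      rw [← Set.ncard_coe_finset]
      simp
    have hcard : (0 : ℝ) < Fintype.card A := by exact_mod_cast Fintype.card_pos
    rw [hones]
    simp only [Finset.sum_boole, Finset.sum_const, Finset.card_univ, nsmul_eq_mul, mul_one] at hb
    have : (Fintype.card A : ℝ) < 2 * (Finset.univ.filter fun a : A => M a b = true).card := by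
      linarith
    exact_mod_cast this
end

section
/- Growth function bound from description complexity of columns: Let n, k, t ≥ 1 be integers and let M : ℝⁿ × ℝᵏ → {0,1} be a Boolean matrix such that for every column r ∈ ℝᵏ the set {x ∈ ℝⁿ : M[x,r] = 1} is t-semialgebraic. Then for every integer m ≥ n and every choice of (not necessarily distinct) columns r_1,…,r_m ∈ ℝᵏ, the number of distinct 0-1 patterns in the set {(M[x,r_1],…,M[x,r_m]) : x ∈ ℝⁿ} ⊆ {0,1}^m is at most (8·e·m·t²/n)ⁿ. -/
/-!
The theorem is Warren's bound on the number of sign patterns of real polynomials, proved here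
through critical points of a log-barrier function and a weighted Bézout inequality.

The `m` columns are described by `N = m t` polynomials of degree at most `t`, and two rows with
different patterns give different sign vectors in `{-1, 0, 1}^N`. Replacing each polynomial `p` by
`p + ε` and `p - ε` for a small `ε` turns this into a count of strict sign vectors of `2 N`
polynomials `q_i` that vanish at none of the chosen points.

For every `c ∈ ℝⁿ` and all positive integers `k_i`, the function
`∏ |q_i|^{k_i} · exp(-|x - c|² / 2)` attains a maximum on the closure of each strict sign region,
and does so inside the region (`exists_critical`). With `λ_i = k_i / q_i(x)` the critical point
equations are the square polynomial system
`x_j - ∑ λ_i ∂_j q_i(x) = c_j`, `λ_i q_i(x) = k_i` in the unknowns `(x, λ)`,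
so for a Zariski-dense set of right-hand sides this system has a solution in every region.

Give `x_j` weight `1` and `λ_i` weight `w`: all equations have weighted degree at most `D = d + w`.
If `Φ` denotes the system and `θ` a linear form in `x`, a dimension count (`exists_relation`) gives a
nontrivial relation `∑_{j < s} h_j(Φ) θ^j = 0` as soon as `s · w^{#λ} > D^{n + #λ}`. At a right-hand
side where some `h_j` is nonzero, `θ` takes fewer than `s` values on the fibre. Finitely many linear
forms `θ` are enough to separate any `s` points, so there are at most `D^{n + #λ} / w^{#λ}` regions
(`card_fiber_le`, `card_strict_patterns_mul_le`). Taking `w` close to `2 N d / n` gives the theorem.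
-/

open MvPolynomial

/-- A set `S ⊆ ℝ^N` is `t`-semialgebraic if there are `m ≤ t` polynomials of total degree
at most `t` whose sign patterns separate `S` from its complement. -/
def IsTSemialgebraic (N t : ℕ) (S : Set (Fin N → ℝ)) : Prop :=
  ∃ (m : ℕ) (p : Fin m → MvPolynomial (Fin N) ℝ),
    m ≤ t ∧ (∀ i, (p i).totalDegree ≤ t) ∧
    ∀ y ∈ S, ∀ y' ∉ S,
      (fun i => Real.sign (eval y (p i))) ≠ (fun i => Real.sign (eval y' (p i)))

/-! ### Lattice points in weighted simplices -/

/-- The exponents of the monomials of weighted degree at most `L`, where the variable `i` has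
weight `W i`. -/
def wSimplex {σ : Type*} [Fintype σ] (W : σ → ℕ) (L : ℕ) : Set (σ →₀ ℕ) :=
  {f | ∑ i, W i * f i ≤ L}

lemma finite_wSimplex {σ : Type*} [Fintype σ] {W : σ → ℕ} (hW : ∀ i, 1 ≤ W i) (L : ℕ) :
    Finite (wSimplex W L) := by
  have hb : ∀ (f : wSimplex W L) (i : σ), f.1 i < L + 1 := by
    rintro ⟨f, hf⟩ i
    have h1 : W i * f i ≤ ∑ i, W i * f i :=
      Finset.single_le_sum (f := fun i => W i * f i) (fun _ _ => Nat.zero_le _) (Finset.mem_univ i)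
    have h2 : f i ≤ W i * f i := Nat.le_mul_of_pos_left _ (hW i)
    have h3 : ∑ i, W i * f i ≤ L := hf
    show f i < L + 1
    omega
  refine Finite.of_injective (β := σ → Fin (L + 1)) (fun f i => ⟨f.1 i, hb f i⟩) ?_
  intro f g h
  ext i
  simpa using congrArg Fin.val (congrFun h i)

lemma card_wSimplex_one_le {σ : Type*} [Fintype σ] (L : ℕ) :
    Nat.card (wSimplex (fun _ : σ => 1) L) ≤ (L + 1) ^ Fintype.card σ := by
  have hb : ∀ (f : wSimplex (fun _ : σ => 1) L) (i : σ), f.1 i < L + 1 := by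
    rintro ⟨f, hf⟩ i
    have h1 : 1 * f i ≤ ∑ i, 1 * f i :=
      Finset.single_le_sum (f := fun i => 1 * f i) (fun _ _ => Nat.zero_le _) (Finset.mem_univ i)
    have h3 : ∑ i, 1 * f i ≤ L := hf
    show f i < L + 1
    omega
  have := Nat.card_le_card_of_injective
    (fun (f : wSimplex (fun _ : σ => 1) L) (i : σ) => (⟨f.1 i, hb f i⟩ : Fin (L + 1))) (by
      intro f g h
      ext i
      simpa using congrArg Fin.val (congrFun h i))
  rwa [Nat.card_fun, Nat.card_fin, Nat.card_eq_fintype_card (α := σ)] at this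

/-- The box `∏ [0, W i)` tiles `ℕ^σ` after stretching the `i`-th coordinate by `W i`, and the cube
`[0, D)^σ` tiles it after stretching by `D`. Comparing the two tilings bounds the number of
weighted exponents by the number of ordinary ones, up to a shift of the degree that does not
depend on `A`. -/
lemma prod_mul_card_wSimplex_le {σ : Type*} [Fintype σ] {W : σ → ℕ} (hW : ∀ i, 1 ≤ W i)
    {D : ℕ} (hD : 1 ≤ D) (A B : ℕ) :
    (∏ i, W i) * Nat.card (wSimplex W (A * D + B)) ≤
      D ^ Fintype.card σ * Nat.card (wSimplex (fun _ : σ => 1) (A + (B + ∑ i, W i))) := by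
  have := finite_wSimplex (σ := σ) (W := fun _ => 1) (fun _ => le_rfl) (A + (B + ∑ i, W i))
  have hmem : ∀ (r : ∀ i, Fin (W i)) (f : wSimplex W (A * D + B)),
      Finsupp.equivFunOnFinite.symm (fun i => (W i * f.1 i + r i) / D) ∈
        wSimplex (fun _ : σ => 1) (A + (B + ∑ i, W i)) := by
    rintro r ⟨f, hf⟩
    have hf' : ∑ i, W i * f i ≤ A * D + B := hf
    show ∑ i, 1 * ((W i * f i + r i) / D) ≤ _
    have h1 : (∑ i, 1 * ((W i * f i + r i) / D)) * D ≤ ∑ i, (W i * f i + W i) := by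
      rw [Finset.sum_mul]
      refine Finset.sum_le_sum fun i _ => ?_
      rw [one_mul]
      exact (Nat.div_mul_le_self _ _).trans (by have := (r i).2; omega)
    rw [Finset.sum_add_distrib] at h1
    refine Nat.le_of_mul_le_mul_right (h1.trans ?_) hD
    nlinarith [Nat.zero_le B, Nat.zero_le (∑ i, W i)]
  have key := Nat.card_le_card_of_injective
    (fun x : (∀ i, Fin (W i)) × wSimplex W (A * D + B) =>
      ((fun i => ⟨(W i * x.2.1 i + x.1 i) % D, Nat.mod_lt _ hD⟩ : σ → Fin D),
        (⟨_, hmem x.1 x.2⟩ : wSimplex (fun _ : σ => 1) (A + (B + ∑ i, W i))))) (by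
      rintro ⟨r, f⟩ ⟨r', f'⟩ h
      have hE : ∀ i, W i * f.1 i + r i = W i * f'.1 i + r' i := by
        intro i
        have h1 := congrArg Fin.val (congrFun (congrArg Prod.fst h) i)
        have h2 := congrArg (fun y => y.2.1 i) h
        simp only [Finsupp.equivFunOnFinite_symm_apply_apply] at h1 h2
        rw [← Nat.div_add_mod (W i * f.1 i + r i) D, h1, h2, Nat.div_add_mod]
      have hf : ∀ i, f.1 i = f'.1 i := by
        intro i
        have := congrArg (· / W i) (hE i)
        simpa [Nat.mul_add_div (hW i), Nat.div_eq_of_lt (r i).2, Nat.div_eq_of_lt (r' i).2]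
          using this
      ext i
      · have := hE i
        rw [hf i] at this
        simpa using this
      · exact hf i)
  simpa [Nat.card_prod, Nat.card_pi] using key

/-- Since the number of lattice points of a simplex grows polynomially in its size, a bounded shift
of the size cannot change it by a constant factor larger than `1` every time. -/
lemma le_of_growth {σ : Type*} [Fintype σ] {K L C : ℕ}
    (h : ∀ A, K * Nat.card (wSimplex (fun _ : σ => 1) A) ≤
      L * Nat.card (wSimplex (fun _ : σ => 1) (A + C))) : K ≤ L := by
  by_contra! hlt
  have h0 : 1 ≤ Nat.card (wSimplex (fun _ : σ => 1) 0) := by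
    have := finite_wSimplex (σ := σ) (W := fun _ => 1) (fun _ => le_rfl) 0
    have : Nonempty (wSimplex (fun _ : σ => 1) 0) := ⟨⟨0, by simp [wSimplex]⟩⟩
    exact Nat.card_pos
  have hj : ∀ j : ℕ, K ^ j ≤ L ^ j * Nat.card (wSimplex (fun _ : σ => 1) (j * C)) := by
    intro j
    induction j with
    | zero => simpa using h0
    | succ j ih =>
      calc K ^ (j + 1) = K ^ j * K := pow_succ _ _
        _ ≤ (L ^ j * Nat.card (wSimplex (fun _ : σ => 1) (j * C))) * K := by gcongr
        _ = L ^ j * (K * Nat.card (wSimplex (fun _ : σ => 1) (j * C))) := by ring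
        _ ≤ L ^ j * (L * Nat.card (wSimplex (fun _ : σ => 1) (j * C + C))) := by
          exact Nat.mul_le_mul_left _ (h _)
        _ = _ := by rw [Nat.succ_mul, pow_succ]; ring
  have hj2 : ∀ j : ℕ, K ^ j ≤ L ^ j * (j * C + 1) ^ Fintype.card σ := fun j =>
    (hj j).trans (Nat.mul_le_mul_left _ (card_wSimplex_one_le _))
  set m := Fintype.card σ
  have hK : (0 : ℝ) < K := by exact_mod_cast (by omega : 0 < K)
  have hr0 : (0 : ℝ) ≤ L / K := by positivity
  have hr1 : (L / K : ℝ) < 1 := by rw [div_lt_one hK]; exact_mod_cast hlt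
  have hlim := (tendsto_pow_const_mul_const_pow_of_lt_one m hr0 hr1).const_mul ((C + 1 : ℝ) ^ m)
  rw [mul_zero] at hlim
  have hev := (hlim.eventually (gt_mem_nhds one_pos)).and (Filter.eventually_ge_atTop 1)
  obtain ⟨j, hj1, hj3⟩ := hev.exists
  have h4 : ((K : ℝ)) ^ j ≤ L ^ j * (j * C + 1) ^ m := by exact_mod_cast hj2 j
  have h5 : ((j : ℝ) * C + 1) ^ m ≤ (C + 1 : ℝ) ^ m * j ^ m := by
    rw [← mul_pow]
    have : (1 : ℝ) ≤ j := by exact_mod_cast hj3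
    gcongr
    nlinarith
  have h6 : (K : ℝ) ^ j ≤ L ^ j * ((C + 1 : ℝ) ^ m * j ^ m) := h4.trans (by gcongr)
  have h7 : (C + 1 : ℝ) ^ m * (j ^ m * (L / K) ^ j) * K ^ j = L ^ j * ((C + 1 : ℝ) ^ m * j ^ m) := by
    rw [div_pow]; field_simp
  have h8 : (0 : ℝ) < K ^ j := by positivity
  nlinarith

/-! ### Polynomials of bounded weighted degree -/

/-- The polynomials of weighted degree at most `L`, for the weights `W` of the variables. -/
noncomputable abbrev wPoly {σ : Type*} [Fintype σ] (W : σ → ℕ) (L : ℕ) : Submodule ℝ (MvPolynomial σ ℝ) :=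
  restrictSupport ℝ (wSimplex W L)

section
variable {σ : Type*} [Fintype σ] {W : σ → ℕ}

lemma wPoly_mono {L L' : ℕ} (h : L ≤ L') : wPoly W L ≤ wPoly W L' :=
  restrictSupport_mono _ fun _ hf => le_trans hf h

lemma mul_mem_wPoly {L L' : ℕ} {p q : MvPolynomial σ ℝ} (hp : p ∈ wPoly W L)
    (hq : q ∈ wPoly W L') : p * q ∈ wPoly W (L + L') := by
  have h := Submodule.mul_mem_mul hp hq
  rw [← restrictSupport_add] at h
  refine restrictSupport_mono _ ?_ h
  rintro _ ⟨f, hf, g, hg, rfl⟩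
  have hf' : ∑ i, W i * f i ≤ L := hf
  have hg' : ∑ i, W i * g i ≤ L' := hg
  show ∑ i, W i * (f + g) i ≤ _
  simp only [Finsupp.add_apply, mul_add, Finset.sum_add_distrib]
  omega

lemma C_mem_wPoly (a : ℝ) (L : ℕ) : (C a : MvPolynomial σ ℝ) ∈ wPoly W L := by
  rw [C_apply, monomial_mem_restrictSupport]
  left; simp [wSimplex]

lemma X_mem_wPoly (i : σ) : (X i : MvPolynomial σ ℝ) ∈ wPoly W (W i) := by
  classical
  rw [X, monomial_mem_restrictSupport]
  left
  simp [wSimplex, Finsupp.single_apply]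

lemma pow_mem_wPoly {L : ℕ} {p : MvPolynomial σ ℝ} (hp : p ∈ wPoly W L) (j : ℕ) :
    p ^ j ∈ wPoly W (j * L) := by
  induction j with
  | zero => simpa using C_mem_wPoly (W := W) 1 0
  | succ j ih => rw [pow_succ, Nat.succ_mul]; exact mul_mem_wPoly ih hp

lemma prod_mem_wPoly {τ : Type*} (s : Finset τ) {L : τ → ℕ} {p : τ → MvPolynomial σ ℝ}
    (hp : ∀ i, p i ∈ wPoly W (L i)) : ∏ i ∈ s, p i ∈ wPoly W (∑ i ∈ s, L i) := by
  classical
  induction s using Finset.induction_on with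
  | empty => simpa using C_mem_wPoly (W := W) 1 0
  | insert a s ha ih => rw [Finset.prod_insert ha, Finset.sum_insert ha]; exact mul_mem_wPoly (hp a) ih

lemma aeval_mem_wPoly {τ : Type*} [Fintype τ] {D A : ℕ} {W' : τ → ℕ} {Φ : τ → MvPolynomial σ ℝ}
    (hΦ : ∀ i, Φ i ∈ wPoly W (W' i * D)) {p : MvPolynomial τ ℝ}
    (hp : p ∈ wPoly W' A) : aeval Φ p ∈ wPoly W (A * D) := by
  rw [aeval_def, eval₂_eq']
  refine Submodule.sum_mem _ fun α hα => ?_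
  have h1 : ∑ i, W' i * α i ≤ A := hp hα
  rw [show (algebraMap ℝ (MvPolynomial σ ℝ)) (coeff α p) = C (coeff α p) from rfl, ← smul_eq_C_mul]
  refine Submodule.smul_mem _ _ (wPoly_mono ?_ (prod_mem_wPoly _ fun i => pow_mem_wPoly (hΦ i) (α i)))
  calc ∑ i, α i * (W' i * D) = (∑ i, W' i * α i) * D := by
        rw [Finset.sum_mul]; exact Finset.sum_congr rfl fun i _ => by ring
    _ ≤ A * D := by gcongr

/-- Weighted Bézout, in algebraic form: if `D ^ #σ < s * ∏ W i`, then `1, θ, …, θ ^ (s - 1)` are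
linearly dependent over the polynomials in the `Φ i`. Otherwise the elements `Φ^α θ^j` with
`|α| ≤ A` and `j < s` would be too many for the space that contains them, for large `A`. -/
lemma exists_relation (hW : ∀ i, 1 ≤ W i) {D : ℕ} (hD : 1 ≤ D) {Φ : σ → MvPolynomial σ ℝ}
    (hΦ : ∀ i, Φ i ∈ wPoly W D) {θ : MvPolynomial σ ℝ} (hθ : θ ∈ wPoly W 1) {s : ℕ}
    (hs : D ^ Fintype.card σ < s * ∏ i, W i) :
    ∃ h : Fin s → MvPolynomial σ ℝ, h ≠ 0 ∧ ∑ j, aeval Φ (h j) * θ ^ (j : ℕ) = 0 := by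
  by_contra! hno
  refine absurd (le_of_growth (σ := σ) (K := s * ∏ i, W i) (L := D ^ Fintype.card σ)
    (C := s + ∑ i, W i) fun A => ?_) (not_le.mpr hs)
  have fin1 := finite_wSimplex (σ := σ) (W := fun _ => 1) (fun _ => le_rfl) A
  have fin2 := finite_wSimplex hW (A * D + s)
  have : Module.Finite ℝ (wPoly (fun _ : σ => 1) A) := Module.Finite.of_basis (basisRestrictSupport ℝ _)
  have : Module.Finite ℝ (wPoly W (A * D + s)) := Module.Finite.of_basis (basisRestrictSupport ℝ _)
  let T : (Fin s → wPoly (fun _ : σ => 1) A) →ₗ[ℝ] MvPolynomial σ ℝ :=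
    ∑ j : Fin s, (LinearMap.mulRight ℝ (θ ^ (j : ℕ))) ∘ₗ (aeval Φ).toLinearMap ∘ₗ
      (Submodule.subtype _) ∘ₗ LinearMap.proj j
  have hTapp : ∀ h, T h = ∑ j, aeval Φ (h j : MvPolynomial σ ℝ) * θ ^ (j : ℕ) := by
    intro h; simp [T]
  have hT : ∀ h, T h ∈ wPoly W (A * D + s) := by
    intro h
    rw [hTapp]
    refine Submodule.sum_mem _ fun j _ => wPoly_mono ?_ (mul_mem_wPoly
      (aeval_mem_wPoly (D := D) (by simpa using hΦ) (h j).2) (pow_mem_wPoly hθ j))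
    have := j.2
    omega
  have hinj : Function.Injective (T.codRestrict _ hT) := by
    rw [← LinearMap.ker_eq_bot, LinearMap.ker_codRestrict, LinearMap.ker_eq_bot']
    intro h hh
    by_contra hne
    refine hno (fun j => (h j : MvPolynomial σ ℝ)) (fun h0 => hne ?_) ((hTapp h).symm.trans hh)
    funext j
    exact Subtype.ext (congrFun h0 j)
  have hrank := LinearMap.finrank_le_finrank_of_injective hinj
  rw [Module.finrank_pi_fintype] at hrank
  simp only [Module.finrank_eq_nat_card_basis (basisRestrictSupport ℝ _), Finset.sum_const,
    Finset.card_univ, Fintype.card_fin, smul_eq_mul] at hrank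
  calc s * (∏ i, W i) * Nat.card (wSimplex (fun _ : σ => 1) A)
      = (∏ i, W i) * (s * Nat.card (wSimplex (fun _ : σ => 1) A)) := by ring
    _ ≤ (∏ i, W i) * Nat.card (wSimplex W (A * D + s)) := by gcongr
    _ ≤ _ := prod_mul_card_wSimplex_le hW hD A s

end

/-! ### Critical points in sign regions -/

lemma hasDerivAt_eval_update {n : ℕ} (q : MvPolynomial (Fin n) ℝ) (x : Fin n → ℝ) (j : Fin n)
    (s : ℝ) :
    HasDerivAt (fun s => eval (Function.update x j s) q)
      (eval (Function.update x j s) (pderiv j q)) s := by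
  induction q using MvPolynomial.induction_on with
  | C a => simpa using hasDerivAt_const s a
  | add p q hp hq => simpa using! hp.add hq
  | mul_X p i hp =>
    have hX : HasDerivAt (fun s => Function.update x j s i) ((Pi.single j 1 : Fin n → ℝ) i) s := by
      by_cases h : i = j
      · subst h; simpa using! hasDerivAt_id s
      · simpa [h] using hasDerivAt_const s (x i)
    have hval : eval (Function.update x j s) (pderiv j (p * X i)) =
        eval (Function.update x j s) (pderiv j p) * Function.update x j s i +
          eval (Function.update x j s) p * (Pi.single j 1 : Fin n → ℝ) i := by
      rw [Derivation.leibniz, pderiv_X]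
      by_cases h : i = j
      · subst h; simp; ring
      · simp [h]; ring
    rw [hval]
    simpa using! hp.mul hX

lemma exists_abs_eval_le {n : ℕ} (q : MvPolynomial (Fin n) ℝ) (c : Fin n → ℝ) :
    ∃ (K : ℝ) (D : ℕ), 0 ≤ K ∧ ∀ x : Fin n → ℝ, |eval x q| ≤ K * (1 + ‖x - c‖) ^ D := by
  induction q using MvPolynomial.induction_on with
  | C a => exact ⟨|a|, 0, abs_nonneg _, fun x => by simp⟩
  | add p q hp hq =>
    obtain ⟨K, D, hK, h⟩ := hp
    obtain ⟨K', D', hK', h'⟩ := hq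
    refine ⟨K + K', D + D', by positivity, fun x => ?_⟩
    have h1 : (1 : ℝ) ≤ 1 + ‖x - c‖ := by linarith [norm_nonneg (x - c)]
    rw [map_add]
    calc |eval x p + eval x q| ≤ |eval x p| + |eval x q| := abs_add_le _ _
      _ ≤ K * (1 + ‖x - c‖) ^ D + K' * (1 + ‖x - c‖) ^ D' := add_le_add (h x) (h' x)
      _ ≤ K * (1 + ‖x - c‖) ^ (D + D') + K' * (1 + ‖x - c‖) ^ (D + D') := by
        gcongr <;> first | exact h1 | omega
      _ = _ := by ring
  | mul_X p i hp =>
    obtain ⟨K, D, hK, h⟩ := hp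
    refine ⟨K * (1 + |c i|), D + 1, by positivity, fun x => ?_⟩
    have h1 : |x i| ≤ (1 + |c i|) * (1 + ‖x - c‖) := by
      have h2 : |x i - c i| ≤ ‖x - c‖ := norm_le_pi_norm (x - c) i
      have h3 : |x i| ≤ |x i - c i| + |c i| := by
        simpa using abs_add_le (x i - c i) (c i)
      nlinarith [norm_nonneg (x - c), abs_nonneg (c i)]
    rw [map_mul, eval_X, abs_mul]
    calc |eval x p| * |x i| ≤ (K * (1 + ‖x - c‖) ^ D) * ((1 + |c i|) * (1 + ‖x - c‖)) := by
          gcongr; exact h x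
      _ = _ := by ring

lemma tendsto_eval_mul_gaussian {n : ℕ} (q : MvPolynomial (Fin n) ℝ) (c : Fin n → ℝ) :
    Filter.Tendsto (fun x : Fin n → ℝ => |eval x q| * Real.exp (-∑ j, (x j - c j) ^ 2 / 2))
      (Filter.cocompact _) (nhds 0) := by
  obtain ⟨K, D, hK, h⟩ := exists_abs_eval_le q c
  have hr : Filter.Tendsto (fun x : Fin n → ℝ => 1 + ‖x - c‖) (Filter.cocompact _) Filter.atTop := by
    refine Filter.tendsto_atTop_mono (f := fun x => -‖c‖ + ‖x‖) (fun x => ?_)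
      (Filter.tendsto_atTop_add_const_left _ _ (tendsto_norm_cocompact_atTop))
    have := norm_sub_norm_le x c
    linarith
  have hlim := ((Real.tendsto_pow_mul_exp_neg_atTop_nhds_zero D).comp hr).const_mul
    (K * Real.exp (3 / 2))
  rw [mul_zero] at hlim
  refine squeeze_zero (fun x => by positivity) (fun x => ?_) hlim
  have hsum : ‖x - c‖ ^ 2 / 2 ≤ ∑ j, (x j - c j) ^ 2 / 2 := by
    have hnn : 0 ≤ ∑ j, (x j - c j) ^ 2 := Finset.sum_nonneg fun _ _ => sq_nonneg _
    have h1 : ‖x - c‖ ≤ Real.sqrt (∑ j, (x j - c j) ^ 2) := by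
      refine (pi_norm_le_iff_of_nonneg (Real.sqrt_nonneg _)).2 fun j => ?_
      refine Real.le_sqrt_of_sq_le ?_
      have := Finset.single_le_sum (f := fun j => (x j - c j) ^ 2) (fun _ _ => sq_nonneg _)
        (Finset.mem_univ j)
      simpa using this
    rw [← Finset.sum_div]
    have h2 := pow_le_pow_left₀ (norm_nonneg _) h1 2
    rw [Real.sq_sqrt hnn] at h2
    linarith
  have hexp : Real.exp (-∑ j, (x j - c j) ^ 2 / 2) ≤
      Real.exp (3 / 2) * Real.exp (-(1 + ‖x - c‖)) := by
    rw [← Real.exp_add]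
    refine Real.exp_le_exp.2 ?_
    nlinarith [sq_nonneg (‖x - c‖ - 1)]
  calc |eval x q| * Real.exp (-∑ j, (x j - c j) ^ 2 / 2)
      ≤ (K * (1 + ‖x - c‖) ^ D) * (Real.exp (3 / 2) * Real.exp (-(1 + ‖x - c‖))) := by
        gcongr; exact h x
    _ = _ := by simp only [Function.comp]; ring

/-- The sign region of `x₀` contains a critical point of
`∑ k i * log |q i| - ∑ (x j - c j) ^ 2 / 2`: a maximizer of its exponential over the closed
region is not on the boundary, because the exponential vanishes there. -/
lemma exists_critical {n : ℕ} {τ : Type*} [Fintype τ] (q : τ → MvPolynomial (Fin n) ℝ)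
    (x₀ : Fin n → ℝ) (hx₀ : ∀ i, eval x₀ (q i) ≠ 0) (c : Fin n → ℝ) (k : τ → ℕ)
    (hk : ∀ i, k i ≠ 0) :
    ∃ x : Fin n → ℝ, (∀ i, 0 < eval x₀ (q i) * eval x (q i)) ∧
      ∀ j, x j - ∑ i, (k i : ℝ) / eval x (q i) * eval x (pderiv j (q i)) = c j := by
  set g : (Fin n → ℝ) → ℝ := fun x =>
    |eval x (∏ i, q i ^ k i)| * Real.exp (-∑ j, (x j - c j) ^ 2 / 2) with hg
  have hcq : ∀ p : MvPolynomial (Fin n) ℝ, Continuous fun x => eval x p :=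
    fun p => MvPolynomial.continuous_eval p
  have hgc : Continuous g := by
    have := hcq (∏ i, q i ^ k i)
    fun_prop
  have hg0 : 0 < g x₀ := by
    have : eval x₀ (∏ i, q i ^ k i) ≠ 0 := by
      simp only [map_prod, map_pow]
      exact Finset.prod_ne_zero_iff.2 fun i _ => pow_ne_zero _ (hx₀ i)
    positivity
  have hclosed : IsClosed {x | ∀ i, 0 ≤ eval x₀ (q i) * eval x (q i)} := by
    simp only [Set.ofPred_forall]
    exact isClosed_iInter fun i => isClosed_le continuous_const (continuous_const.mul (hcq _))
  have hopen : IsOpen {x | ∀ i, 0 < eval x₀ (q i) * eval x (q i)} := by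
    simp only [Set.ofPred_forall]
    exact isOpen_iInter_of_finite fun i => isOpen_lt continuous_const (continuous_const.mul (hcq _))
  obtain ⟨x, hxs, hmax⟩ := hgc.continuousOn.exists_isMaxOn' hclosed (x₀ := x₀)
    (fun i => mul_self_nonneg _) (Filter.Eventually.filter_mono inf_le_left
      (((tendsto_eval_mul_gaussian _ c).eventually (gt_mem_nhds hg0)).mono fun _ h => le_of_lt h))
  have hgx : 0 < g x := lt_of_lt_of_le hg0 (hmax (show x₀ ∈ {x | _} from fun i => mul_self_nonneg _))
  have hqx : ∀ i, eval x (q i) ≠ 0 := by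
    intro i hi
    have : eval x (∏ i, q i ^ k i) = 0 := by
      simp only [map_prod, map_pow]
      exact Finset.prod_eq_zero (Finset.mem_univ i) (by rw [hi, zero_pow (hk i)])
    simp only [hg, this, abs_zero, zero_mul, lt_irrefl] at hgx
  have hxpos : ∀ i, 0 < eval x₀ (q i) * eval x (q i) := fun i =>
    lt_of_le_of_ne (hxs i) (mul_ne_zero (hx₀ i) (hqx i)).symm
  refine ⟨x, hxpos, fun j => ?_⟩
  have hup : Function.update x j (x j) = x := Function.update_eq_self j x
  set ℓ : ℝ → ℝ := fun s => (∑ i, (k i : ℝ) * Real.log (eval (Function.update x j s) (q i))) -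
    ∑ a, (Function.update x j s a - c a) ^ 2 / 2 with hℓ
  have hcu : Continuous fun s : ℝ => Function.update x j s := continuous_const.update j continuous_id
  have hlog : ∀ s, (∀ i, 0 < eval x₀ (q i) * eval (Function.update x j s) (q i)) →
      Real.exp (ℓ s) = g (Function.update x j s) := by
    intro s hs
    have hne : ∀ i, eval (Function.update x j s) (q i) ≠ 0 := fun i h => by
      have := hs i; simp [h] at this
    simp only [hℓ, hg, sub_eq_add_neg, Real.exp_add, Real.exp_sum, map_prod, map_pow,
      Finset.abs_prod, abs_pow]
    congr 1
    refine Finset.prod_congr rfl fun i _ => ?_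
    rw [Real.exp_nat_mul, Real.exp_log_eq_abs (hne i)]
  have hloc : IsLocalMax ℓ (x j) := by
    have : ∀ᶠ s in nhds (x j), ∀ i, 0 < eval x₀ (q i) * eval (Function.update x j s) (q i) :=
      (hopen.preimage hcu).mem_nhds (by
        simp only [Set.mem_preimage, hup]; exact hxpos)
    filter_upwards [this] with s hs
    rw [← Real.exp_le_exp, hlog s hs, hlog (x j) (by rwa [hup]), hup]
    exact hmax fun i => (hs i).le
  have hder : HasDerivAt ℓ ((∑ i, (k i : ℝ) * (eval x (pderiv j (q i)) / eval x (q i))) -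
      (x j - c j)) (x j) := by
    refine HasDerivAt.sub (HasDerivAt.fun_sum fun i _ => HasDerivAt.const_mul _ ?_) ?_
    · have := (hasDerivAt_eval_update (q i) x j (x j)).log (by rw [hup]; exact hqx i)
      rwa [hup] at this
    · have : x j - c j = ∑ a, (if a = j then x j - c j else 0) := by simp
      rw [this]
      refine HasDerivAt.fun_sum fun a _ => ?_
      by_cases h : a = j
      · subst h
        simp only [Function.update_self, if_true]
        have := (((hasDerivAt_id (x a)).sub_const (c a)).pow 2).div_const 2
        simpa using this
      · simp only [Function.update_of_ne h, if_neg h]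
        exact hasDerivAt_const _ _
  have h0 := hloc.hasDerivAt_eq_zero hder
  have : ∑ i, (k i : ℝ) / eval x (q i) * eval x (pderiv j (q i)) =
      ∑ i, (k i : ℝ) * (eval x (pderiv j (q i)) / eval x (q i)) :=
    Finset.sum_congr rfl fun i _ => by ring
  rw [this]
  linarith

/-! ### Counting solutions and strict sign patterns -/

/-- The linear forms `∑ u ^ j * x_j`, for `u` in a finite set of integers whose size depends only on
`s` and `n`, are enough to separate any `s` points of `ℝⁿ`. -/
lemma exists_separating (s n : ℕ) : ∃ U : ℕ, ∀ v : Fin s → Fin n → ℝ, Function.Injective v →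
    ∃ u : Fin U, Function.Injective fun a => ∑ j : Fin n, (u : ℝ) ^ (j : ℕ) * v a j := by
  classical
  refine ⟨s * s * n + 1, fun v hv => ?_⟩
  by_contra! hno
  let R : Fin s × Fin s → Polynomial ℝ := fun ab =>
    ∑ j : Fin n, Polynomial.C (v ab.1 j - v ab.2 j) * Polynomial.X ^ (j : ℕ)
  let S : Finset (Fin s × Fin s) := Finset.univ.filter fun ab => ab.1 ≠ ab.2
  have hR : ∀ ab ∈ S, R ab ≠ 0 := by
    intro ab hab h0
    have hne : ab.1 ≠ ab.2 := (Finset.mem_filter.1 hab).2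
    refine hne (hv (funext fun j => ?_))
    have := congrArg (fun p => Polynomial.coeff p (j : ℕ)) h0
    simp only [R, Polynomial.finsetSum_coeff, Polynomial.coeff_C_mul_X_pow,
      Polynomial.coeff_zero, Fin.val_inj, Finset.sum_ite_eq, Finset.mem_univ, if_true] at this
    linarith
  have hdeg : ∀ ab, (R ab).natDegree ≤ n := fun ab =>
    Polynomial.natDegree_sum_le_of_forall_le _ _ fun j _ =>
      (Polynomial.natDegree_C_mul_X_pow_le _ _).trans j.2.le
  have hP : ∏ ab ∈ S, R ab ≠ 0 := Finset.prod_ne_zero_iff.2 hR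
  refine hP (Polynomial.eq_zero_of_natDegree_lt_card_of_eval_eq_zero _
    (f := fun u : Fin (s * s * n + 1) => (u : ℝ)) ?_ (fun u => ?_) ?_)
  · intro a b h
    simpa [Fin.val_inj] using h
  · obtain ⟨a, b, hab, hne⟩ : ∃ a b, (∑ j : Fin n, (u : ℝ) ^ (j : ℕ) * v a j) =
        (∑ j : Fin n, (u : ℝ) ^ (j : ℕ) * v b j) ∧ a ≠ b := by
      simpa [Function.Injective] using hno u
    rw [Polynomial.eval_prod]
    refine Finset.prod_eq_zero (i := (a, b)) (by simpa [S] using hne) ?_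
    simp only [R, Polynomial.eval_finsetSum, Polynomial.eval_mul, Polynomial.eval_C,
      Polynomial.eval_pow, Polynomial.eval_X, sub_mul, Finset.sum_sub_distrib]
    rw [sub_eq_zero]
    simpa [mul_comm] using hab
  · rw [Fintype.card_fin]
    refine Nat.lt_succ_of_le ((Polynomial.natDegree_prod_le _ _).trans ?_)
    refine (Finset.sum_le_card_nsmul _ _ n fun ab _ => hdeg ab).trans ?_
    have : S.card ≤ s * s := (Finset.card_le_univ _).trans (by simp)
    rw [smul_eq_mul]
    gcongr

/-- If a square polynomial system of weighted degree at most `D` has `s` solutions with distinct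
`x`-parts for every right-hand side in a box with infinite sides, then `s ≤ D ^ (n + #τ) / w ^ #τ`.
The box contains a right-hand side at which a nonzero coefficient of each of finitely many relations
survives, and the relation of a linear form that separates the solutions there gives the bound. -/
lemma card_fiber_le {n s w D : ℕ} {τ : Type*} [Fintype τ] (hw : 1 ≤ w) (hD : 1 ≤ D)
    {Φ : Fin n ⊕ τ → MvPolynomial (Fin n ⊕ τ) ℝ}
    (hΦ : ∀ a, Φ a ∈ wPoly (Sum.elim (fun _ => 1) fun _ => w) D)
    (Y : Fin n ⊕ τ → Set ℝ) (hY : ∀ a, (Y a).Infinite)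
    (hsol : ∀ y ∈ Set.pi .univ Y, ∃ z : Fin s → (Fin n ⊕ τ → ℝ),
      (∀ b a, eval (z b) (Φ a) = y a) ∧ Function.Injective fun b j => z b (Sum.inl j)) :
    s * w ^ Fintype.card τ ≤ D ^ (n + Fintype.card τ) := by
  classical
  by_contra! hlt
  set W : Fin n ⊕ τ → ℕ := Sum.elim (fun _ => 1) fun _ => w with hWdef
  have hW : ∀ a, 1 ≤ W a := by rintro (a | a) <;> simp [W, hw]
  have hlt' : D ^ Fintype.card (Fin n ⊕ τ) < s * ∏ a, W a := by
    simpa [W, Fintype.prod_sum_type] using hlt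
  obtain ⟨U, hU⟩ := exists_separating s n
  let θ : Fin U → MvPolynomial (Fin n ⊕ τ) ℝ := fun u =>
    ∑ j : Fin n, C ((u : ℝ) ^ (j : ℕ)) * X (Sum.inl j)
  have hθ : ∀ u, θ u ∈ wPoly W 1 := fun u => Submodule.sum_mem _ fun j _ => by
    rw [← smul_eq_C_mul]
    exact Submodule.smul_mem _ _ (X_mem_wPoly (W := W) (Sum.inl j))
  choose h hne hrel using fun u => exists_relation hW hD hΦ (hθ u) hlt'
  choose j hj using fun u => Function.ne_iff.1 (hne u)
  have hP : ∏ u, h u (j u) ≠ 0 := Finset.prod_ne_zero_iff.2 fun u _ => hj u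
  obtain ⟨y, hyY, hy⟩ : ∃ y ∈ Set.pi .univ Y, eval y (∏ u, h u (j u)) ≠ 0 := by
    by_contra! h0
    exact hP (funext_set Y hY fun y hy => by rw [h0 y hy, map_zero])
  obtain ⟨z, hz, hzinj⟩ := hsol y hyY
  obtain ⟨u, hu⟩ := hU _ hzinj
  rw [map_prod] at hy
  have hyu : eval y (h u (j u)) ≠ 0 := fun h0 => hy (Finset.prod_eq_zero (Finset.mem_univ u) h0)
  let R : Polynomial ℝ := ∑ i : Fin s, Polynomial.C (eval y (h u i)) * Polynomial.X ^ (i : ℕ)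
  have hs : 0 < s := (j u).pos
  have hR0 : R = 0 := by
    refine Polynomial.eq_zero_of_natDegree_lt_card_of_eval_eq_zero R hu (fun b => ?_) ?_
    · have := congrArg (eval (z b)) (hrel u)
      rw [map_sum, map_zero] at this
      rw [← this, Polynomial.eval_finsetSum]
      refine Finset.sum_congr rfl fun i _ => ?_
      have hcomp : eval (z b) (aeval Φ (h u i)) = eval y (h u i) := by
        have h1 : eval (z b) (aeval Φ (h u i)) = eval (fun a => eval (z b) (Φ a)) (h u i) := by
          induction h u i using MvPolynomial.induction_on with
          | C a => simp
          | add p q hp hq => rw [map_add, map_add, map_add, hp, hq]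
          | mul_X p i hp => rw [map_mul, map_mul, map_mul, hp, aeval_X, eval_X]
        rw [h1]
        congr 2
        exact funext (hz b)
      rw [map_mul, hcomp]
      simp [θ]
    · rw [Fintype.card_fin]
      refine lt_of_le_of_lt (Polynomial.natDegree_sum_le_of_forall_le (n := s - 1) _ _ fun i _ =>
        (Polynomial.natDegree_C_mul_X_pow_le _ _).trans (by have := i.2; omega)) (by omega)
  refine hyu ?_
  have := congrArg (fun p => Polynomial.coeff p (j u : ℕ)) hR0
  simpa [R, Polynomial.finsetSum_coeff, Polynomial.coeff_C_mul_X_pow, Fin.val_inj] using this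

lemma mem_wPoly_of_totalDegree_le {n d : ℕ} {p : MvPolynomial (Fin n) ℝ}
    (hp : p.totalDegree ≤ d) : p ∈ wPoly (fun _ => 1) d := by
  intro α hα
  have := (le_totalDegree (s := α) hα).trans hp
  rw [Finsupp.sum_fintype _ _ (fun _ => rfl)] at this
  simpa [wSimplex] using this

lemma pderiv_mem_wPoly {n d : ℕ} {p : MvPolynomial (Fin n) ℝ} (j : Fin n)
    (hp : p ∈ wPoly (fun _ => 1) d) : pderiv j p ∈ wPoly (fun _ => 1) d := by
  rw [p.as_sum, map_sum]
  refine Submodule.sum_mem _ fun α hα => ?_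
  rw [pderiv_monomial, monomial_mem_restrictSupport]
  left
  have h1 : ∑ i, 1 * α i ≤ d := hp hα
  refine le_trans (Finset.sum_le_sum fun i _ => ?_) h1
  simp

lemma rename_mem_wPoly {n d w : ℕ} {τ : Type*} [Fintype τ] {p : MvPolynomial (Fin n) ℝ}
    (hp : p ∈ wPoly (fun _ => 1) d) :
    rename Sum.inl p ∈ wPoly (Sum.elim (fun _ => 1) fun _ : τ => w) d := by
  have hX : ∀ i : Fin n, (X (Sum.inl i) : MvPolynomial (Fin n ⊕ τ) ℝ) ∈
      wPoly (Sum.elim (fun _ => 1) fun _ : τ => w) (1 * 1) := fun i =>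
    X_mem_wPoly (W := Sum.elim (fun _ : Fin n => 1) fun _ : τ => w) (Sum.inl i)
  have key := aeval_mem_wPoly hX hp
  rw [mul_one] at key
  have he : rename Sum.inl p =
      aeval (fun i : Fin n => (X (Sum.inl i) : MvPolynomial (Fin n ⊕ τ) ℝ)) p := by
    have h := aeval_rename (R := ℝ) (k := Sum.inl)
      (g := (X : Fin n ⊕ τ → MvPolynomial (Fin n ⊕ τ) ℝ)) p
    rw [aeval_X_left_apply] at h
    exact h
  rwa [he]

/-- The count of strict sign patterns. The free parameter `w` is the weight of the multipliers
`λ_i`. -/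
lemma card_strict_patterns_mul_le {n s d w : ℕ} {τ : Type*} [Fintype τ] (hw : 1 ≤ w)
    (q : τ → MvPolynomial (Fin n) ℝ) (hq : ∀ i, (q i).totalDegree ≤ d)
    (x : Fin s → Fin n → ℝ) (hx : ∀ b i, eval (x b) (q i) ≠ 0)
    (hsep : ∀ a b, a ≠ b → ∃ i, eval (x a) (q i) * eval (x b) (q i) < 0) :
    s * w ^ Fintype.card τ ≤ (d + w) ^ (n + Fintype.card τ) := by
  classical
  -- The critical point system in the unknowns `(x, λ)`.
  let Φ : Fin n ⊕ τ → MvPolynomial (Fin n ⊕ τ) ℝ := Sum.elim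
    (fun j => X (Sum.inl j) - ∑ i, X (Sum.inr i) * rename Sum.inl (pderiv j (q i)))
    (fun i => X (Sum.inr i) * rename Sum.inl (q i))
  have hq' := fun i => mem_wPoly_of_totalDegree_le (hq i)
  refine card_fiber_le (Φ := Φ) hw (by omega) ?_
    (Sum.elim (fun _ => Set.univ) fun _ => Set.range fun k : ℕ => ((k + 1 : ℕ) : ℝ)) ?_ ?_
  · have hX : ∀ i, X (Sum.inr i) ∈ wPoly (Sum.elim (fun _ : Fin n => 1) fun _ : τ => w) w :=
      fun i => X_mem_wPoly (W := Sum.elim (fun _ : Fin n => 1) fun _ : τ => w) (Sum.inr i)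
    rintro (j | i)
    · refine Submodule.sub_mem _ (wPoly_mono (by simp; omega) (X_mem_wPoly (Sum.inl j)))
        (Submodule.sum_mem _ fun i _ => ?_)
      rw [add_comm d w]
      exact mul_mem_wPoly (hX i) (rename_mem_wPoly (pderiv_mem_wPoly j (hq' i)))
    · rw [add_comm d w]
      exact mul_mem_wPoly (hX i) (rename_mem_wPoly (hq' i))
  · rintro (j | i)
    · exact Set.infinite_univ
    · exact Set.infinite_range_of_injective fun a b h => by simpa using h
  · intro y hy
    choose k hk using fun i => hy (Sum.inr i) trivial
    simp only at hk
    choose ξ hξpos hξ using fun b => exists_critical q (x b) (hx b) (fun j => y (Sum.inl j))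
      (fun i => k i + 1) (fun i => Nat.succ_ne_zero _)
    have hξ0 : ∀ b i, eval (ξ b) (q i) ≠ 0 := fun b i h0 => by
      have := hξpos b i; simp [h0] at this
    refine ⟨fun b => Sum.elim (ξ b) fun i => ((k i + 1 : ℕ) : ℝ) / eval (ξ b) (q i), ?_, ?_⟩
    · rintro b (j | i)
      · simpa [Φ, eval_rename] using hξ b j
      · simp only [Φ, Sum.elim_inr, map_mul, eval_X, eval_rename, Sum.elim_comp_inl]
        rw [div_mul_cancel₀ _ (hξ0 b i)]
        exact hk i
    · intro a b hab
      by_contra hne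
      obtain ⟨i, hi⟩ := hsep a b hne
      have hab' : ξ a = ξ b := hab
      have h1 := hξpos a i
      have h2 := hξpos b i
      rw [hab'] at h1
      nlinarith [mul_pos h1 h2, mul_self_nonneg (eval (ξ b) (q i))]

/-! ### From strict patterns to all sign patterns -/

/-- The choice `w = t * c` with `c = ⌊2 N / n⌋ + 1`: then `(1 + 1 / c) ^ (2 N) ≤ e ^ n` and
`1 + c ≤ 8 N / n`. -/
lemma bound_arith {n N t s : ℕ} (hn : 1 ≤ n) (ht : 1 ≤ t) (hN : n ≤ N)
    (h : s * (t * (2 * N / n + 1)) ^ (2 * N) ≤ (t + t * (2 * N / n + 1)) ^ (n + 2 * N)) :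
    (s : ℝ) ≤ (8 * Real.exp 1 * N * t / n) ^ n := by
  set c := 2 * N / n + 1 with hc
  have hn' : (0 : ℝ) < n := by exact_mod_cast hn
  have ht' : (0 : ℝ) < t := by exact_mod_cast ht
  have hN' : (n : ℝ) ≤ N := by exact_mod_cast hN
  have hc0 : (0 : ℝ) < c := by exact_mod_cast Nat.succ_pos _
  have hc1 : (2 * N : ℝ) ≤ n * c := by
    have : 2 * N < n * c := by
      rw [hc]; exact Nat.lt_mul_div_succ _ hn
    exact_mod_cast this.le
  have hc2 : (1 + c : ℝ) ≤ 8 * N / n := by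
    have h1 : (c : ℝ) ≤ 2 * N / n + 1 := by
      rw [hc]; push_cast
      have : ((2 * N / n : ℕ) : ℝ) ≤ ((2 * N : ℕ) : ℝ) / n := Nat.cast_div_le
      push_cast at this
      linarith
    have h2 : (1 : ℝ) ≤ N / n := by rw [le_div_iff₀ hn']; linarith
    have h3 : (2 * N / n : ℝ) = 2 * (N / n) := by ring
    have h4 : (8 * N / n : ℝ) = 8 * (N / n) := by ring
    linarith
  have h' : (s : ℝ) * (t * c) ^ (2 * N) ≤ (t + t * c) ^ (n + 2 * N) := by exact_mod_cast h
  have hpos : (0 : ℝ) < (t * c) ^ (2 * N) := by positivity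
  have hexp : (1 + c : ℝ) ^ (2 * N) ≤ c ^ (2 * N) * Real.exp 1 ^ n := by
    have h1 : (1 + c : ℝ) ≤ c * Real.exp (1 / c) := by
      have := Real.add_one_le_exp (1 / c : ℝ)
      calc (1 + c : ℝ) = c * (1 / c + 1) := by field_simp
        _ ≤ _ := by gcongr
    calc (1 + c : ℝ) ^ (2 * N) ≤ (c * Real.exp (1 / c)) ^ (2 * N) := by gcongr
      _ = c ^ (2 * N) * Real.exp ((2 * N : ℕ) * (1 / c)) := by rw [mul_pow, ← Real.exp_nat_mul]
      _ ≤ c ^ (2 * N) * Real.exp (n * 1) := by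
        refine mul_le_mul_of_nonneg_left (Real.exp_le_exp.2 ?_) (by positivity)
        push_cast
        rw [mul_one_div, div_le_iff₀ hc0, mul_one]
        exact hc1
      _ = _ := by rw [Real.exp_nat_mul]
  refine le_of_mul_le_mul_right (h'.trans ?_) hpos
  calc ((t : ℝ) + t * c) ^ (n + 2 * N)
      = t ^ (n + 2 * N) * ((1 + c) ^ n * (1 + c) ^ (2 * N)) := by
        rw [← pow_add, ← mul_pow]; ring
    _ ≤ t ^ (n + 2 * N) * ((8 * N / n) ^ n * (c ^ (2 * N) * Real.exp 1 ^ n)) := by gcongr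
    _ = (t * (8 * N / n) * Real.exp 1) ^ n * (t * c) ^ (2 * N) := by
        rw [pow_add]; simp only [mul_pow]; ring
    _ = _ := by congr 2; ring

/-- Numbers of different sign in `{-1, 0, 1}` are strictly separated by one of the shifts `± ε`. -/
lemma exists_shift_neg {u v ε : ℝ} (hε : 0 < ε) (hu : u ≠ 0 → ε < |u|) (hv : v ≠ 0 → ε < |v|)
    (h : Real.sign u ≠ Real.sign v) :
    ∃ b : Bool, (u + bif b then ε else -ε) * (v + bif b then ε else -ε) < 0 := by
  wlog huv : u < v generalizing u v
  · have hlt : v < u := lt_of_le_of_ne (not_lt.1 huv) fun he => h (by rw [he])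
    obtain ⟨b, hb⟩ := this hv hu h.symm hlt
    exact ⟨b, by rwa [mul_comm]⟩
  rcases lt_trichotomy u 0 with hu0 | rfl | hu0
  · have h1 := hu hu0.ne
    rw [abs_of_neg hu0] at h1
    have hv0 : 0 ≤ v := by
      by_contra! hv0
      exact h (by rw [Real.sign_of_neg hu0, Real.sign_of_neg hv0])
    exact ⟨true, mul_neg_of_neg_of_pos (by simp; linarith) (by simp; linarith)⟩
  · have h1 := hv huv.ne'
    rw [abs_of_pos huv] at h1
    exact ⟨false, mul_neg_of_neg_of_pos (by simp; linarith) (by simp; linarith)⟩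
  · exact absurd (by rw [Real.sign_of_pos hu0, Real.sign_of_pos (hu0.trans huv)]) h

lemma exists_pos_lt_abs {κ : Type*} [Finite κ] (v : κ → ℝ) :
    ∃ ε : ℝ, 0 < ε ∧ ∀ a, v a ≠ 0 → ε < |v a| := by
  have h : ∀ᶠ ε in nhdsWithin (0 : ℝ) (Set.Ioi 0), ∀ a, v a ≠ 0 → ε < |v a| := by
    refine Filter.eventually_all.2 fun a => ?_
    by_cases ha : v a = 0
    · simp [ha]
    · filter_upwards [nhdsWithin_le_nhds (gt_mem_nhds (abs_pos.2 ha))] with ε hε _ using hε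
  obtain ⟨ε, h1, h2⟩ := (h.and self_mem_nhdsWithin).exists
  exact ⟨ε, h2, h1⟩

/-- Warren's bound for sign patterns in `{-1, 0, 1}`, stated for `s` points whose sign vectors are
pairwise distinct. -/
lemma card_sign_patterns_le {n s t : ℕ} {κ : Type*} [Fintype κ] (hn : 1 ≤ n) (ht : 1 ≤ t)
    (hκ : n ≤ Fintype.card κ) (p : κ → MvPolynomial (Fin n) ℝ)
    (hp : ∀ i, (p i).totalDegree ≤ t) (x : Fin s → Fin n → ℝ)
    (hsep : ∀ a b, a ≠ b → ∃ i, Real.sign (eval (x a) (p i)) ≠ Real.sign (eval (x b) (p i))) :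
    (s : ℝ) ≤ (8 * Real.exp 1 * Fintype.card κ * t / n) ^ n := by
  obtain ⟨ε, hε, hεv⟩ := exists_pos_lt_abs fun ai : Fin s × κ => eval (x ai.1) (p ai.2)
  refine bound_arith hn ht hκ ?_
  have key := card_strict_patterns_mul_le (τ := κ × Bool) (d := t)
    (w := t * (2 * Fintype.card κ / n + 1)) (Nat.mul_pos ht (Nat.succ_pos _))
    (fun ib => p ib.1 + C (bif ib.2 then ε else -ε)) (fun ib => ?_) x (fun b ib => ?_)
    (fun a b hab => ?_)
  · simpa [mul_comm] using key
  · exact (totalDegree_add _ _).trans (max_le (hp _) (by simp))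
  · have h1 := hεv (b, ib.1)
    simp only [map_add, eval_C] at h1 ⊢
    intro h0
    have h2 : |eval (x b) (p ib.1)| = ε := by
      rw [eq_neg_of_add_eq_zero_left h0, abs_neg]
      cases ib.2 <;> simp [abs_of_pos hε]
    by_cases h3 : eval (x b) (p ib.1) = 0
    · rw [h3, abs_zero] at h2; linarith
    · have := h1 h3; linarith
  · obtain ⟨i, hi⟩ := hsep a b hab
    obtain ⟨c, hc⟩ := exists_shift_neg hε (hεv (a, i)) (hεv (b, i)) hi
    exact ⟨(i, c), by simpa using hc⟩

/-- **Growth function bound from description complexity of columns.** If every column of a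
Boolean matrix `M : ℝⁿ × ℝᵏ → {0,1}` is `t`-semialgebraic, then for every `m ≥ n` and every
choice of `m` columns, the number of distinct 0-1 patterns appearing as rows in these
columns is at most `(8·e·m·t²/n)ⁿ`. -/
theorem growth_from_description_complexity
    (n k t : ℕ) (hn : 1 ≤ n) (hk : 1 ≤ k) (ht : 1 ≤ t)
    (M : (Fin n → ℝ) → (Fin k → ℝ) → Bool)
    (hcol : ∀ r : Fin k → ℝ, IsTSemialgebraic n t {x : Fin n → ℝ | M x r = true}) :
    ∀ m : ℕ, n ≤ m → ∀ r : Fin m → (Fin k → ℝ),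
      (Set.ncard {v : Fin m → Bool | ∃ x : Fin n → ℝ, v = fun i => M x (r i)} : ℝ) ≤
        (8 * Real.exp 1 * m * t ^ 2 / n) ^ n := by
  intro m hm r
  choose l p hl hdeg hsep using fun i => hcol (r i)
  -- Each column gets exactly `t` polynomials, by padding with zeros.
  let P : Fin m × Fin t → MvPolynomial (Fin n) ℝ := fun a =>
    if h : (a.2 : ℕ) < l a.1 then p a.1 ⟨a.2, h⟩ else 0
  have hPdeg : ∀ a, (P a).totalDegree ≤ t := by
    intro a
    by_cases h : (a.2 : ℕ) < l a.1
    · simpa [P, h] using hdeg _ _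
    · simp [P, h]
  have hPsep' : ∀ y y' i, M y (r i) = true → M y' (r i) ≠ true →
      ∃ a, Real.sign (eval y (P a)) ≠ Real.sign (eval y' (P a)) := by
    intro y y' i hy hy'
    obtain ⟨j, hj⟩ := Function.ne_iff.1 (hsep i y hy y' hy')
    exact ⟨(i, ⟨j, j.2.trans_le (hl i)⟩), by simpa [P] using hj⟩
  have hPsep : ∀ y y', (fun i => M y (r i)) ≠ (fun i => M y' (r i)) →
      ∃ a, Real.sign (eval y (P a)) ≠ Real.sign (eval y' (P a)) := by
    intro y y' hne
    obtain ⟨i, hi⟩ := Function.ne_iff.1 hne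
    by_cases hy : M y (r i) = true
    · exact hPsep' y y' i hy fun h => hi (hy.trans h.symm)
    · have hy' : M y' (r i) = true := by
        cases h1 : M y (r i) <;> cases h2 : M y' (r i) <;> simp_all
      obtain ⟨a, ha⟩ := hPsep' y' y i hy' hy
      exact ⟨a, ha.symm⟩
  set V : Set (Fin m → Bool) := {v | ∃ x : Fin n → ℝ, v = fun i => M x (r i)}
  have e : Fin V.ncard ≃ V := (Finite.equivFin V).symm
  choose x hx using fun v : V => v.2
  have hcard := card_sign_patterns_le hn ht (κ := Fin m × Fin t)
    (by simp; nlinarith) P hPdeg (fun a => x (e a)) (fun a b hab => hPsep _ _ fun h =>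
      hab (e.injective (Subtype.ext ((hx (e a)).trans (h.trans (hx (e b)).symm)))))
  convert hcard using 2
  simp only [Fintype.card_prod, Fintype.card_fin]
  push_cast
  ring
end

section
/- Doubling trick for sign patterns: Let p_1,…,p_m ∈ ℝ[x_1,…,x_n] be polynomials. Then there exists ε > 0 such that the number of distinct sign patterns |{(sgn p_1(x),…,sgn p_m(x)) : x ∈ ℝⁿ}| is at most the number of distinct sign patterns of the doubled sequence attained at points where all 2m doubled polynomials are nonzero, namely at most |{(sgn(p_1(x)−ε), sgn(p_1(x)+ε),…,sgn(p_m(x)−ε), sgn(p_m(x)+ε)) : x ∈ ℝⁿ and p_i(x) ≠ ε and p_i(x) ≠ −ε for all i}|. -/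
open MvPolynomial

/-!
There are finitely many sign patterns, so one may pick a witness point for each of them and an
`ε > 0` smaller than every nonzero `|p_i|` at these witnesses. At such a point `p_i ≠ ±ε`, and the
pair `(sgn (p_i - ε), sgn (p_i + ε))` is `(-1,-1)`, `(-1,1)` or `(1,1)` according to whether
`sgn p_i` is `-1`, `0` or `1`. Its average is thus `sgn p_i` (`sign_eq_average`), so averaging maps
the (finite) set of doubled patterns onto a set containing all the original ones.
-/

lemma sign_mem_signs (a : ℝ) : Real.sign a ∈ ({-1, 0, 1} : Set ℝ) := by
  rcases Real.sign_apply_eq a with h | h | h <;> simp [h]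

/-- For `ε` below a nonzero `|a|`, the doubled signs determine the sign of `a`. -/
lemma sign_eq_average {a ε : ℝ} (hε : 0 < ε) (h : a ≠ 0 → ε < |a|) :
    Real.sign a = (Real.sign (a - ε) + Real.sign (a + ε)) / 2 := by
  rcases lt_trichotomy a 0 with ha | rfl | ha
  · have := h ha.ne
    rw [abs_of_neg ha] at this
    rw [Real.sign_of_neg ha, Real.sign_of_neg (by linarith : a - ε < 0),
      Real.sign_of_neg (by linarith : a + ε < 0)]
    norm_num
  · rw [Real.sign_zero, Real.sign_of_neg (by linarith : 0 - ε < 0),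
      Real.sign_of_pos (by linarith : 0 < 0 + ε)]
    norm_num
  · have := h ha.ne'
    rw [abs_of_pos ha] at this
    rw [Real.sign_of_pos ha, Real.sign_of_pos (by linarith : 0 < a - ε),
      Real.sign_of_pos (by linarith : 0 < a + ε)]
    norm_num

/-- **Doubling trick for sign patterns.** For polynomials `p₁,…,p_m ∈ ℝ[x₁,…,x_n]` there is
an `ε > 0` such that the number of distinct sign patterns of the sequence is at most the
number of distinct sign patterns of the doubled sequence `p₁−ε, p₁+ε, …, p_m−ε, p_m+ε`
attained at points where all the doubled polynomials are nonzero. -/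
theorem doubling_trick_sign_patterns
    (n m : ℕ) (p : Fin m → MvPolynomial (Fin n) ℝ) :
    ∃ ε : ℝ, 0 < ε ∧
      Set.ncard {v : Fin m → ℝ |
          ∃ x : Fin n → ℝ, v = fun i => Real.sign (eval x (p i))} ≤
      Set.ncard {v : Fin m → ℝ × ℝ |
          ∃ x : Fin n → ℝ,
            (∀ i, eval x (p i) ≠ ε ∧ eval x (p i) ≠ -ε) ∧
            v = fun i =>
              (Real.sign (eval x (p i) - ε), Real.sign (eval x (p i) + ε))} := by
  set S := {v : Fin m → ℝ | ∃ x : Fin n → ℝ, v = fun i => Real.sign (eval x (p i))} with hS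
  have hfin : ({-1, 0, 1} : Set ℝ).Finite := Set.toFinite _
  have hSfin : S.Finite := by
    refine (Set.Finite.pi' (fun _ : Fin m => hfin)).subset ?_
    rintro v ⟨x, rfl⟩ i
    exact sign_mem_signs _
  have hx : ∀ v : Fin m → ℝ, ∃ x : Fin n → ℝ,
      v ∈ S → v = fun i => Real.sign (eval x (p i)) := by
    intro v
    by_cases hv : v ∈ S
    · obtain ⟨x, hx⟩ := hv
      exact ⟨x, fun _ => hx⟩
    · exact ⟨0, fun h => absurd h hv⟩
  choose x hx using hx
  have hev : ∀ᶠ ε in nhdsWithin (0 : ℝ) (Set.Ioi 0),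
      ∀ v ∈ S, ∀ i, eval (x v) (p i) ≠ 0 → ε < |eval (x v) (p i)| := by
    rw [Filter.eventually_all_finite hSfin]
    intro v _
    rw [Filter.eventually_all]
    intro i
    by_cases h0 : eval (x v) (p i) = 0
    · simp [h0]
    · filter_upwards [nhdsWithin_le_nhds (Iio_mem_nhds (abs_pos.2 h0))] with ε hε _ using hε
  obtain ⟨ε, hεS, hε⟩ := (hev.and self_mem_nhdsWithin).exists
  have hε : 0 < ε := hε
  refine ⟨ε, hε, ?_⟩
  set T := {v : Fin m → ℝ × ℝ | ∃ x : Fin n → ℝ,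
    (∀ i, eval x (p i) ≠ ε ∧ eval x (p i) ≠ -ε) ∧
    v = fun i => (Real.sign (eval x (p i) - ε), Real.sign (eval x (p i) + ε))} with hT
  have hTfin : T.Finite := by
    refine (Set.Finite.pi' (fun _ : Fin m => hfin.prod hfin)).subset ?_
    rintro v ⟨x, -, rfl⟩ i
    exact ⟨sign_mem_signs _, sign_mem_signs _⟩
  let g : (Fin m → ℝ × ℝ) → Fin m → ℝ := fun w i => ((w i).1 + (w i).2) / 2
  have hsub : S ⊆ g '' T := by
    intro v hv
    refine ⟨_, ⟨x v, fun i => ?_, rfl⟩, ?_⟩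
    · constructor <;> intro h <;> have := hεS v hv i <;> rw [h] at this
      · exact absurd (this hε.ne') (by rw [abs_of_pos hε]; exact lt_irrefl _)
      · exact absurd (this (neg_ne_zero.2 hε.ne'))
          (by rw [abs_neg, abs_of_pos hε]; exact lt_irrefl _)
    · conv_rhs => rw [hx v hv]
      funext i
      exact (sign_eq_average hε (hεS v hv i)).symm
  exact (Set.ncard_le_ncard hsub (hTfin.image g)).trans (Set.ncard_image_le hTfin)
end

section
/- Majority property from growth functions (countable case): There exists an absolute constant c > 0 with the following property. Let X be a measurable space with a probability measure μ, and let H be a countable family of measurable functions h : X → {0,1} such that μ{x ∈ X : h(x) = 1} ≥ 2/3 for every h ∈ H. Let m be a positive integer with m ≥ 2/c such that for every choice of (not necessarily distinct) points x_1,…,x_m ∈ X the number of distinct patterns |{(h(x_1),…,h(x_m)) : h ∈ H}| is at most e^{c·m}. Then there exist (not necessarily distinct) points x_1,…,x_m ∈ X such that for every h ∈ H strictly more than m/2 of the indices i ∈ {1,…,m} satisfy h(x_i) = 1. -/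
open MeasureTheory

/-!
The proof is the Vapnik–Chervonenkis double-sample argument, with `c = 1/10000`.

Suppose every sample `x ∈ X^m` is bad: some `h ∈ H` is `1` on at most `m/2` of the points. For each
such `h`, an independent second sample `y ∈ X^m` has fewer than `5m/12` zeros of `h` with
probability at least `1/5`, by Markov's inequality (`ghost_sample`). Hence with probability at
least `1/5` the double sample `(x, y)` lies in the event `deviationEvent`: some `h ∈ H` takes the
value `1` at least `m/12` times more often on `y` than on `x` (`deviation_lower`).

On the other hand, exchanging `x_i` and `y_i` for any set of indices `i` preserves the law of the
double sample. For a fixed double sample and a fixed pair of patterns, an exponential-moment bound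
shows that at most `2^m e^{-m/288}` of the `2^m` exchanges produce a deviation of `m/12`
(`card_swap_le`). At most `e^{cm} · e^{cm}` pairs of patterns occur, so the event has probability at
most `e^{2cm - m/288}` (`deviation_upper`), which is less than `1/5` once `m ≥ 2/c`.
-/

/-- The value of a Boolean as the real number `0` or `1`. -/
noncomputable def bval (b : Bool) : ℝ := if b then 1 else 0

lemma measurable_bval : Measurable bval := measurable_of_finite _

lemma bval_not (b : Bool) : bval (!b) = 1 - bval b := by
  cases b <;> simp [bval]

lemma bval_nonneg (b : Bool) : 0 ≤ bval b := by
  cases b <;> simp [bval]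

lemma bval_le_one (b : Bool) : bval b ≤ 1 := by
  cases b <;> simp [bval]

/-- Exchange the two coordinates of `p` when the flag is set. -/
def swapIf {α : Type} (b : Bool) (p : α × α) : α × α := if b then p.swap else p

/-- The excess of ones in the second components over ones in the first components. -/
noncomputable def excess {m : ℕ} (q : Fin m → Bool × Bool) : ℝ :=
  ∑ i, (bval (q i).2 - bval (q i).1)

lemma exp_swapIf_le (p : Bool × Bool) :
    ∑ b : Bool, Real.exp ((1 / 12) * (bval (swapIf b p).2 - bval (swapIf b p).1))
      ≤ 2 * Real.exp (1 / 288) := by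
  have h1 : Real.exp (1 / 12) + Real.exp (-(1 / 12)) ≤ 2 * Real.exp (1 / 288) := by
    have := Real.cosh_le_exp_half_sq (1 / 12)
    rw [Real.cosh_eq] at this
    norm_num at this ⊢
    linarith
  have h0 : (1 : ℝ) ≤ Real.exp (1 / 288) := Real.one_le_exp (by norm_num)
  rcases p with ⟨_ | _, _ | _⟩ <;> simp [swapIf, bval] at h1 h0 ⊢ <;> linarith

open Classical in
/-- The Chernoff bound for random exchanges, with exponential parameter `1/12`. -/
lemma card_swap_le {m : ℕ} (q : Fin m → Bool × Bool) :
    ((Finset.univ.filter fun s : Fin m → Bool =>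
        (m : ℝ) / 12 ≤ excess fun i => swapIf (s i) (q i)).card : ℝ)
      ≤ 2 ^ m * Real.exp (-(m / 288)) := by
  have h1 : ∑ s : Fin m → Bool, Real.exp ((1 / 12) * excess fun i => swapIf (s i) (q i))
      ≤ (2 * Real.exp (1 / 288)) ^ m := by
    calc ∑ s : Fin m → Bool, Real.exp ((1 / 12) * excess fun i => swapIf (s i) (q i))
        = ∑ s : Fin m → Bool, ∏ i, Real.exp ((1 / 12) *
            (bval (swapIf (s i) (q i)).2 - bval (swapIf (s i) (q i)).1)) := by
          refine Finset.sum_congr rfl fun s _ => ?_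
          rw [← Real.exp_sum, excess, Finset.mul_sum]
      _ = ∏ i, ∑ b : Bool, Real.exp ((1 / 12) *
            (bval (swapIf b (q i)).2 - bval (swapIf b (q i)).1)) := by
          rw [Finset.prod_univ_sum, Fintype.piFinset_univ]
      _ ≤ ∏ _i : Fin m, (2 * Real.exp (1 / 288)) :=
          Finset.prod_le_prod (fun i _ => Finset.sum_nonneg fun _ _ => (Real.exp_pos _).le)
            fun i _ => exp_swapIf_le _
      _ = _ := by simp
  have h2 : ((Finset.univ.filter fun s : Fin m → Bool =>
        (m : ℝ) / 12 ≤ excess fun i => swapIf (s i) (q i)).card : ℝ) * Real.exp (m / 144)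
      ≤ ∑ s : Fin m → Bool, Real.exp ((1 / 12) * excess fun i => swapIf (s i) (q i)) := by
    rw [← nsmul_eq_mul, ← Finset.sum_const]
    refine (Finset.sum_le_sum fun s hs => ?_).trans
      (Finset.sum_le_sum_of_subset_of_nonneg (Finset.filter_subset _ _)
        fun _ _ _ => (Real.exp_pos _).le)
    have := (Finset.mem_filter.1 hs).2
    exact Real.exp_le_exp.2 (by linarith)
  have h3 : (2 * Real.exp (1 / 288)) ^ m
      = 2 ^ m * Real.exp (-(m / 288)) * Real.exp (m / 144) := by
    rw [mul_pow, ← Real.exp_nat_mul, mul_assoc, ← Real.exp_add]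
    congr 2
    ring
  exact le_of_mul_le_mul_right ((h2.trans h1).trans h3.le) (Real.exp_pos _)

/-- The double samples on which some `h ∈ H` takes the value `1` at least `m/12` times more often
on the second sample than on the first. -/
def deviationEvent {X : Type} (H : Set (X → Bool)) (m : ℕ) : Set (Fin m → X × X) :=
  {z | ∃ h ∈ H, (m : ℝ) / 12 ≤ excess fun i => (h (z i).1, h (z i).2)}

open Classical in
/-- For a fixed double sample, a union bound over the pairs of patterns controls the number of
exchanges that lead into `deviationEvent`. -/
lemma card_swapIf_mem_le {X : Type} {H : Set (X → Bool)} {m : ℕ} {c : ℝ}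
    (hg : ∀ xs : Fin m → X,
      (Set.ncard {v : Fin m → Bool | ∃ h ∈ H, v = fun i => h (xs i)} : ℝ) ≤ Real.exp (c * m))
    (z : Fin m → X × X) :
    ((Finset.univ.filter fun s : Fin m → Bool =>
        (fun i => swapIf (s i) (z i)) ∈ deviationEvent H m).card : ℝ)
      ≤ 2 ^ m * Real.exp (2 * c * m - m / 288) := by
  set A : (Fin m → X) → Finset (Fin m → Bool) := fun xs =>
    {v : Fin m → Bool | ∃ h ∈ H, v = fun i => h (xs i)}.toFinset with hA
  have hcard : ∀ xs, ((A xs).card : ℝ) ≤ Real.exp (c * m) := fun xs => by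
    have := hg xs
    rwa [Set.ncard_eq_toFinset_card'] at this
  set P := A (fun i => (z i).1) ×ˢ A (fun i => (z i).2) with hP
  have hsub : (Finset.univ.filter fun s : Fin m → Bool =>
        (fun i => swapIf (s i) (z i)) ∈ deviationEvent H m) ⊆
      P.biUnion fun p => Finset.univ.filter fun s : Fin m → Bool =>
        (m : ℝ) / 12 ≤ excess fun i => swapIf (s i) (p.1 i, p.2 i) := by
    intro s hs
    obtain ⟨h, hh, hd⟩ := (Finset.mem_filter.1 hs).2
    refine Finset.mem_biUnion.2 ⟨(fun i => h (z i).1, fun i => h (z i).2), ?_, ?_⟩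
    · simp only [hP, hA, Finset.mem_product, Set.mem_toFinset, Set.mem_ofPred_eq]
      exact ⟨⟨h, hh, rfl⟩, ⟨h, hh, rfl⟩⟩
    · refine Finset.mem_filter.2 ⟨Finset.mem_univ _, hd.trans_eq ?_⟩
      congr 1
      ext i <;> cases hsi : s i <;> simp [swapIf, hsi]
  have hPc : (P.card : ℝ) ≤ Real.exp (c * m) * Real.exp (c * m) := by
    rw [hP, Finset.card_product, Nat.cast_mul]
    exact mul_le_mul (hcard _) (hcard _) (Nat.cast_nonneg _) (Real.exp_pos _).le
  calc _ ≤ ((P.biUnion fun p => Finset.univ.filter fun s : Fin m → Bool =>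
        (m : ℝ) / 12 ≤ excess fun i => swapIf (s i) (p.1 i, p.2 i)).card : ℝ) := by
          exact_mod_cast Finset.card_le_card hsub
    _ ≤ ∑ p ∈ P, ((Finset.univ.filter fun s : Fin m → Bool =>
        (m : ℝ) / 12 ≤ excess fun i => swapIf (s i) (p.1 i, p.2 i)).card : ℝ) := by
          exact_mod_cast Finset.card_biUnion_le
    _ ≤ ∑ _p ∈ P, 2 ^ m * Real.exp (-(m / 288)) :=
          Finset.sum_le_sum fun p _ => card_swap_le _
    _ = P.card * (2 ^ m * Real.exp (-(m / 288))) := by simp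
    _ ≤ Real.exp (c * m) * Real.exp (c * m) * (2 ^ m * Real.exp (-(m / 288))) := by gcongr
    _ = 2 ^ m * (Real.exp (c * m) * Real.exp (c * m) * Real.exp (-(m / 288))) := by ring
    _ = _ := by
          rw [← Real.exp_add, ← Real.exp_add]
          congr 2
          ring

section

variable {X : Type} [MeasurableSpace X] {H : Set (X → Bool)} {m : ℕ}

lemma measurableSet_deviationEvent (hH : H.Countable) (hm : ∀ h ∈ H, Measurable h) :
    MeasurableSet (deviationEvent H m) := by
  have : deviationEvent H m =
      ⋃ h ∈ H, {z | (m : ℝ) / 12 ≤ excess fun i => (h (z i).1, h (z i).2)} := by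
    ext z; simp [deviationEvent]
  rw [this]
  refine MeasurableSet.biUnion hH fun h hh => measurableSet_le measurable_const ?_
  have h1 := hm h hh
  have h2 := measurable_bval
  unfold excess
  fun_prop

variable (μ : Measure X) [IsProbabilityMeasure μ]

lemma measurePreserving_swapIf (b : Bool) :
    MeasurePreserving (swapIf b : X × X → X × X) (μ.prod μ) (μ.prod μ) := by
  cases b
  · exact MeasurePreserving.id (μ.prod μ)
  · exact Measure.measurePreserving_swap (μ := μ) (ν := μ)

/-- Averaging `card_swapIf_mem_le` over the double sample, using invariance under exchanges. -/
lemma deviation_upper {c : ℝ} (hH : H.Countable) (hm : ∀ h ∈ H, Measurable h)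
    (hg : ∀ xs : Fin m → X,
      (Set.ncard {v : Fin m → Bool | ∃ h ∈ H, v = fun i => h (xs i)} : ℝ) ≤ Real.exp (c * m)) :
    (Measure.pi fun _ : Fin m => μ.prod μ).real (deviationEvent H m)
      ≤ Real.exp (2 * c * m - m / 288) := by
  classical
  set P := Measure.pi fun _ : Fin m => μ.prod μ
  set E := deviationEvent H m with hE
  have hEm : MeasurableSet E := measurableSet_deviationEvent hH hm
  have hT : ∀ s : Fin m → Bool,
      MeasurePreserving (fun (z : Fin m → X × X) i => swapIf (s i) (z i)) P P := fun s =>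
    measurePreserving_pi _ _ fun i => measurePreserving_swapIf μ (s i)
  have hint : ∀ s : Fin m → Bool, Integrable
      (((fun (z : Fin m → X × X) i => swapIf (s i) (z i)) ⁻¹' E).indicator (1 : (Fin m → X × X) → ℝ)) P :=
    fun s => (integrable_const (1 : ℝ)).indicator ((hT s).measurable hEm)
  have h1 : ∫ z, ∑ s : Fin m → Bool,
      ((fun (z : Fin m → X × X) i => swapIf (s i) (z i)) ⁻¹' E).indicator (1 : (Fin m → X × X) → ℝ) z ∂P
      = 2 ^ m * P.real E := by
    rw [integral_finsetSum _ fun s _ => hint s]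
    have : ∀ s : Fin m → Bool, ∫ z,
        ((fun (z : Fin m → X × X) i => swapIf (s i) (z i)) ⁻¹' E).indicator (1 : (Fin m → X × X) → ℝ) z ∂P
        = P.real E := fun s => by
      rw [integral_indicator_one ((hT s).measurable hEm), measureReal_def,
        (hT s).measure_preimage hEm.nullMeasurableSet, measureReal_def]
    simp [this]
  have h2 : ∫ z, ∑ s : Fin m → Bool,
      ((fun (z : Fin m → X × X) i => swapIf (s i) (z i)) ⁻¹' E).indicator (1 : (Fin m → X × X) → ℝ) z ∂P
      ≤ ∫ _z, 2 ^ m * Real.exp (2 * c * m - m / 288) ∂P := by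
    refine integral_mono (integrable_finsetSum _ fun s _ => hint s) (integrable_const _) fun z => ?_
    refine le_trans (le_of_eq ?_) (card_swapIf_mem_le hg z)
    simp [Set.indicator_apply, hE]
  rw [h1] at h2
  simp only [integral_const, probReal_univ, smul_eq_mul, one_mul] at h2
  exact le_of_mul_le_mul_left h2 (by positivity)

/-- Markov's inequality for the number of zeros, which has mean at most `m/3`. -/
lemma ghost_sample (hm0 : 1 ≤ m) {h : X → Bool} (hh : Measurable h)
    (hμ : 2 / 3 ≤ μ {x : X | h x = true}) :
    1 / 5 ≤ (Measure.pi fun _ : Fin m => μ).real {y | ∑ i, bval (!h (y i)) < 5 * m / 12} := by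
  set ν := Measure.pi fun _ : Fin m => μ
  have hg : Measurable fun x => bval (!h x) :=
    measurable_bval.comp ((measurable_of_finite Bool.not).comp hh)
  have hgi : Integrable (fun x => bval (!h x)) μ :=
    Integrable.of_bound hg.aestronglyMeasurable 1 (ae_of_all _ fun x => by
      rw [Real.norm_of_nonneg (bval_nonneg _)]; exact bval_le_one _)
  have hev : ∀ i : Fin m, MeasurePreserving (fun y : Fin m → X => y i) ν μ := fun i =>
    measurePreserving_eval (fun _ : Fin m => μ) i
  have hμ' : 2 / 3 ≤ μ.real {x : X | h x = true} := by
    have := ENNReal.toReal_mono (measure_ne_top _ _) hμ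
    simpa [measureReal_def] using this
  have hmean : ∫ x, bval (!h x) ∂μ ≤ 1 / 3 := by
    have hs : MeasurableSet {x : X | h x = true} := hh (measurableSet_singleton true)
    have : (fun x => bval (!h x)) = {x : X | h x = true}ᶜ.indicator (1 : X → ℝ) := by
      ext x; cases hx : h x <;> simp [bval, hx]
    rw [this, integral_indicator_one hs.compl, probReal_compl_eq_one_sub hs]
    linarith
  have hii : ∀ i : Fin m, Integrable (fun y : Fin m → X => bval (!h (y i))) ν := fun i =>
    (hev i).integrable_comp_of_integrable hgi
  have hint : ∫ y, ∑ i, bval (!h (y i)) ∂ν ≤ m / 3 := by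
    rw [integral_finsetSum _ fun i _ => hii i]
    have : ∀ i : Fin m, ∫ y, bval (!h (y i)) ∂ν = ∫ x, bval (!h x) ∂μ := fun i => by
      rw [← (hev i).map_eq, integral_map (hev i).measurable.aemeasurable
        hg.aestronglyMeasurable]
    simp only [this, Finset.sum_const, Finset.card_univ, Fintype.card_fin, nsmul_eq_mul]
    have : (0 : ℝ) ≤ m := Nat.cast_nonneg m
    nlinarith
  have hmk : (5 * m / 12 : ℝ) * ν.real {y | (5 * m / 12 : ℝ) ≤ ∑ i, bval (!h (y i))}
      ≤ ∫ y, ∑ i, bval (!h (y i)) ∂ν := mul_meas_ge_le_integral_of_nonneg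
    (ae_of_all _ fun y => Finset.sum_nonneg fun i _ => bval_nonneg (!h (y i)))
    (integrable_finsetSum _ fun i _ => hii i) (5 * m / 12 : ℝ)
  have hms : MeasurableSet {y : Fin m → X | 5 * (m : ℝ) / 12 ≤ ∑ i, bval (!h (y i))} :=
    measurableSet_le measurable_const
      (Finset.measurable_sum _ fun i _ => hg.comp (measurable_pi_apply i))
  have hc : {y : Fin m → X | ∑ i, bval (!h (y i)) < 5 * (m : ℝ) / 12}
      = {y : Fin m → X | 5 * (m : ℝ) / 12 ≤ ∑ i, bval (!h (y i))}ᶜ := by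
    ext y; simp
  rw [hc, probReal_compl_eq_one_sub hms]
  have hmpos : (1 : ℝ) ≤ m := by exact_mod_cast hm0
  have := hmk.trans hint
  by_contra hcon
  push Not at hcon
  nlinarith

/-- If every sample is bad for some `h ∈ H`, Fubini turns `ghost_sample` into a lower bound for
the probability of `deviationEvent`. -/
lemma deviation_lower (hH : H.Countable) (hm : ∀ h ∈ H, Measurable h)
    (hμ : ∀ h ∈ H, 2 / 3 ≤ μ {x : X | h x = true}) (hm0 : 1 ≤ m)
    (hbad : ∀ xs : Fin m → X, ∃ h ∈ H, ∑ i, bval (h (xs i)) ≤ m / 2) :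
    1 / 5 ≤ (Measure.pi fun _ : Fin m => μ.prod μ).real (deviationEvent H m) := by
  set ν := Measure.pi fun _ : Fin m => μ with hν
  have hEm : MeasurableSet (deviationEvent H m) := measurableSet_deviationEvent hH hm
  have hmp := (measurePreserving_arrowProdEquivProdArrow X X (Fin m)
    (fun _ => μ) (fun _ => μ)).symm
  have h1 : ENNReal.ofReal (1 / 5) ≤ (ν.prod ν)
      ((MeasurableEquiv.arrowProdEquivProdArrow X X (Fin m)).symm ⁻¹' deviationEvent H m) := by
    rw [Measure.prod_apply ((MeasurableEquiv.measurable _) hEm)]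
    calc ENNReal.ofReal (1 / 5) = ∫⁻ _x, ENNReal.ofReal (1 / 5) ∂ν := by simp
      _ ≤ _ := lintegral_mono fun x => ?_
    obtain ⟨h, hh, hx⟩ := hbad x
    have hgs := ghost_sample μ hm0 (hm h hh) (hμ h hh)
    refine (ENNReal.ofReal_le_ofReal hgs).trans ?_
    rw [ofReal_measureReal]
    refine measure_mono fun y hy => ⟨h, hh, ?_⟩
    simp only [Set.mem_ofPred_eq, bval_not, Finset.sum_sub_distrib, Finset.sum_const,
      Finset.card_univ, Fintype.card_fin, nsmul_eq_mul, mul_one] at hy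
    change (m : ℝ) / 12 ≤ ∑ i, (bval (h (y i)) - bval (h (x i)))
    rw [Finset.sum_sub_distrib]
    linarith
  rw [hmp.measure_preimage hEm.nullMeasurableSet] at h1
  exact (ENNReal.ofReal_le_iff_le_toReal (measure_ne_top _ _)).1 h1

end

/-- **Majority property from growth functions (countable case).** There is an absolute
constant `c > 0` such that: for any probability space `X`, any countable family `H` of
measurable 0-1 valued functions each with `μ{h = 1} ≥ 2/3`, and any positive integer
`m ≥ 2/c` for which the growth function of `H` at `m` is at most `e^{c·m}`, there are
points `x₁,…,x_m ∈ X` such that every `h ∈ H` takes value 1 on strictly more than `m/2`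
of them. -/
theorem majority_from_growth :
    ∃ c : ℝ, 0 < c ∧
      ∀ (X : Type) (_ : MeasurableSpace X) (μ : Measure X),
        IsProbabilityMeasure μ →
        ∀ H : Set (X → Bool), H.Countable →
          (∀ h ∈ H, MeasurableSet {x : X | h x = true}) →
          (∀ h ∈ H, 2 / 3 ≤ μ {x : X | h x = true}) →
          ∀ m : ℕ, 1 ≤ m → 2 / c ≤ (m : ℝ) →
            (∀ xs : Fin m → X,
              (Set.ncard {v : Fin m → Bool | ∃ h ∈ H, v = fun i => h (xs i)} : ℝ) ≤
                Real.exp (c * m)) →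
            ∃ xs : Fin m → X, ∀ h ∈ H,
              m < 2 * Set.ncard {i : Fin m | h (xs i) = true} := by
  refine ⟨1 / 10000, by norm_num, ?_⟩
  intro X _ μ _ H hH hmeas hμ m hm0 hmc hg
  have hm : ∀ h ∈ H, Measurable h := fun h hh => measurable_to_bool (hmeas h hh)
  by_contra hcon
  push Not at hcon
  have hbad : ∀ xs : Fin m → X, ∃ h ∈ H, ∑ i, bval (h (xs i)) ≤ m / 2 := fun xs => by
    obtain ⟨h, hh, hx⟩ := hcon xs
    refine ⟨h, hh, ?_⟩
    have hs : ∑ i, bval (h (xs i)) = (Set.ncard {i : Fin m | h (xs i) = true} : ℝ) := by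
      rw [Set.ncard_eq_toFinset_card']
      simp [bval]
    have : (2 : ℝ) * (Set.ncard {i : Fin m | h (xs i) = true} : ℝ) ≤ m := by exact_mod_cast hx
    rw [hs]
    linarith
  have h1 := deviation_lower μ hH hm hμ hm0 hbad
  have h2 := deviation_upper μ hH hm hg
  have h3 : Real.exp (2 * (1 / 10000) * m - m / 288) ≤ Real.exp (-10) :=
    Real.exp_le_exp.2 (by
      have : (20000 : ℝ) ≤ m := by linarith
      linarith)
  have h4 : Real.exp (-10) * Real.exp 10 = 1 := by rw [← Real.exp_add]; simp
  have h5 := Real.add_one_le_exp (10 : ℝ)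
  have h6 := Real.exp_pos (-10)
  nlinarith
end

section
/- Infinite majority rule: There exists an absolute constant C > 0 with the following property. Let n, k, t ≥ 1 be integers and let M : ℝⁿ × ℝᵏ → {0,1} be a Boolean matrix such that the set {(x,r) ∈ ℝ^{n+k} : M[x,r] = 1} is semialgebraic and such that for every column r ∈ ℝᵏ the set {x ∈ ℝⁿ : M[x,r] = 1} is t-semialgebraic. Let T ⊆ ℝⁿ be any set of rows and let μ be a Borel probability measure on ℝᵏ with μ{r ∈ ℝᵏ : M[x,r] = 1} ≥ 2/3 for every x ∈ T. Then there exist an integer m with n ≤ m ≤ C·n·(1 + ln t) and (not necessarily distinct) points r_1,…,r_m ∈ ℝᵏ such that for every x ∈ T strictly more than m/2 of the indices i ∈ {1,…,m} satisfy M[x,r_i] = 1. -/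
/-! The proof samples columns twice, each time with a Vapnik–Chervonenkis argument.

*Growth of the columns.* `s` polynomials of degree at most `d ≥ 1` in `n` variables have at most
`(n + 2 * s).choose n * d ^ n` sign vectors (`card_sign_vectors_le`). For sign vectors without
zeros (`card_sign_cells_le`), every realised sign cell contains a critical point of a logarithmic
barrier with Gaussian decay (`exists_critical`), so the cells give distinct solutions of one system
of `n + s` equations of bidegree `(d, 1)` in `x` and auxiliary multipliers `y`. In place of a
multihomogeneous Bézout theorem, a dimension count (`exists_relation`) produces a univariate
polynomial of small degree vanishing at the values of a generic linear form at these solutions.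

*Uniform sampling.* A countable family of measurable sets of measure at most `a` with few traces on
`2 * m` points has an `m`-point sample in which every member has frequency below `a + 2 * δ`
(`exists_sample`). This is symmetrization by a ghost sample, random exchange of the two samples,
and Hoeffding's inequality (`card_flips_le`) with a union bound over the traces.

*Finite sample.* Since `M` is semialgebraic, the failure set `{r | M x r ≠ 1}` of a row is a Boolean
combination of half-spaces in the space of monomials in `r`. Such cells are pointwise limits of
cells with rational parameters, which form a countable family of polynomial growth, so `μ` can be
replaced by the uniform measure on some finite list of columns, with failure frequency at most `2/5`
in every row of `T` (`exists_finite_columns`). The length of that list is uncontrolled.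

*Short sample.* On a finite list only finitely many failure sets occur, and their growth is bounded
through the `n` row variables and the `t`-semialgebraicity of the columns. Sampling again with
`m = 16000 * n * ⌈1 + ln t⌉` brings every failure frequency below `1/2` (`exists_majority`). -/

open MvPolynomial MeasureTheory

/-- A set `S ⊆ ℝ^N` is semialgebraic if it is a finite union of sets of the form
`{y : p(y) = 0, q₁(y) > 0, …, q_l(y) > 0}` for real polynomials `p, q₁, …, q_l`. -/
def IsSemialgebraic (N : ℕ) (S : Set (Fin N → ℝ)) : Prop :=
  ∃ (c : ℕ) (p : Fin c → MvPolynomial (Fin N) ℝ)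
    (l : Fin c → ℕ) (q : (i : Fin c) → Fin (l i) → MvPolynomial (Fin N) ℝ),
    S = ⋃ i : Fin c, {y | eval y (p i) = 0 ∧ ∀ j, 0 < eval y (q i j)}

namespace InfiniteMajority

/-! ### Exponent vectors and bidegrees -/

open Finset in
/-- The finite set of exponent vectors `b : ι →₀ ℕ` with `∑ b ≤ B`. -/
noncomputable def simplex (ι : Type*) [Fintype ι] [DecidableEq ι] (B : ℕ) : Finset (ι →₀ ℕ) :=
  (range (B + 1)).biUnion fun j => (univ : Finset ι).finsuppAntidiag j

lemma mem_simplex {ι : Type*} [Fintype ι] [DecidableEq ι] {B : ℕ} {b : ι →₀ ℕ} :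
    b ∈ simplex ι B ↔ ∑ i, b i ≤ B := by
  simp [simplex, Finset.mem_finsuppAntidiag]

lemma card_simplex (ι : Type*) [Fintype ι] [DecidableEq ι] (B : ℕ) :
    (simplex ι B).card = (B + Fintype.card ι).choose (Fintype.card ι) := by
  rw [simplex, Finset.card_biUnion]
  · simp_rw [Finset.card_finsuppAntidiag_nat_eq_choose, Finset.card_univ]
    rcases h : Fintype.card ι with _ | k
    · rw [Finset.sum_eq_single 0]
      · simp
      · intro j _ hj
        exact Nat.choose_eq_zero_of_lt (by omega)
      · simp
    · rw [← add_assoc, ← Nat.sum_range_add_choose]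
      refine Finset.sum_congr rfl fun j _ => ?_
      rw [show k + 1 + j - 1 = j + k by omega, Nat.choose_symm_add]
  · intro i _ j _ hij
    rw [Function.onFun, Finset.disjoint_left]
    intro b hb hb'
    rw [Finset.mem_finsuppAntidiag] at hb hb'
    exact hij (hb.1.symm.trans hb'.1)

open Filter Topology in
/-- The dimension count behind the two-block Bézout bound: the number of pairs of exponent vectors
of degrees at most `(d * B + K, B)` in blocks of `n` and `s` variables is asymptotically
`(n + s).choose n * d ^ n` times the number of exponent vectors of degree at most `B` in `n + s`
variables. -/
lemma exists_dim_lt (n s d K : ℕ) (hK : (n + s).choose n * d ^ n < K) :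
    ∃ B : ℕ, (d * B + K + n).choose n * (B + s).choose s < K * (B + (n + s)).choose (n + s) := by
  have hlim : Tendsto (fun B : ℕ => ((d : ℝ) + (K + n) / B) ^ n * (1 + (s : ℝ) / B) ^ s)
      atTop (𝓝 ((d + 0 : ℝ) ^ n * (1 + 0) ^ s)) := by
    refine ((tendsto_const_nhds.add ?_).pow n).mul ((tendsto_const_nhds.add ?_).pow s)
    · exact tendsto_const_div_atTop_nhds_zero_nat _
    · exact tendsto_const_div_atTop_nhds_zero_nat _
  have hfact : ((n + s).choose n : ℝ) * (n.factorial * s.factorial) = (n + s).factorial := by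
    rw [← mul_assoc, Nat.choose_symm_add]
    exact_mod_cast Nat.add_choose_mul_factorial_mul_factorial n s
  have hpos : (0 : ℝ) < n.factorial * s.factorial := by positivity
  have hlt : ((d + 0 : ℝ) ^ n * (1 + 0) ^ s) <
      K * (n.factorial * s.factorial) / (n + s).factorial := by
    rw [lt_div_iff₀ (by positivity), ← hfact]
    have : ((n + s).choose n * d ^ n : ℝ) < K := by exact_mod_cast hK
    calc _ = ((n + s).choose n * d ^ n : ℝ) * (n.factorial * s.factorial) := by ring
      _ < _ := by gcongr
  obtain ⟨B, hB, hB0⟩ := ((hlim.eventually_lt_const hlt).and (eventually_gt_atTop 0)).exists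
  refine ⟨B, ?_⟩
  have hBr : (0 : ℝ) < B := by exact_mod_cast hB0
  have h1 : ((d * B + K + n).choose n : ℝ) * n.factorial ≤ (d * B + K + n : ℝ) ^ n := by
    have := Nat.choose_le_pow_div (α := ℝ) n (d * B + K + n)
    rw [le_div_iff₀ (by positivity)] at this
    exact_mod_cast this
  have h2 : ((B + s).choose s : ℝ) * s.factorial ≤ (B + s : ℝ) ^ s := by
    have := Nat.choose_le_pow_div (α := ℝ) s (B + s)
    rw [le_div_iff₀ (by positivity)] at this
    exact_mod_cast this
  have h3 : (B : ℝ) ^ (n + s) ≤ ((B + (n + s)).choose (n + s) : ℝ) * (n + s).factorial := by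
    have h := Nat.pow_succ_le_ascFactorial (B + 1) (n + s)
    rw [Nat.ascFactorial_eq_factorial_mul_choose] at h
    have : B ^ (n + s) ≤ (B + (n + s)).choose (n + s) * (n + s).factorial :=
      (Nat.pow_le_pow_left (by omega) _).trans (h.trans_eq (mul_comm _ _))
    exact_mod_cast this
  have h4 : (d * B + K + n : ℝ) ^ n * (B + s : ℝ) ^ s * (n + s).factorial <
      K * (n.factorial * s.factorial) * (B : ℝ) ^ (n + s) := by
    rw [lt_div_iff₀ (by positivity)] at hB
    have e1 : (d * B + K + n : ℝ) = (d + (K + n) / B) * B := by field_simp; ring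
    have e2 : (B + s : ℝ) = (1 + s / B) * B := by field_simp
    rw [e1, e2, mul_pow, mul_pow, pow_add]
    calc _ = ((d + (K + n) / B : ℝ) ^ n * (1 + s / B) ^ s * (n + s).factorial)
          * (B ^ n * B ^ s : ℝ) := by ring
      _ < _ := by gcongr
  have h5 : ((d * B + K + n).choose n * (B + s).choose s : ℝ) <
      K * (B + (n + s)).choose (n + s) := by
    have hN : (0 : ℝ) < (n + s).factorial := by positivity
    refine lt_of_mul_lt_mul_right (a := (n.factorial * s.factorial * (n + s).factorial : ℝ)) ?_
      (by positivity)
    calc _ = (((d * B + K + n).choose n : ℝ) * n.factorial) *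
            (((B + s).choose s : ℝ) * s.factorial) * (n + s).factorial := by ring
      _ ≤ (d * B + K + n : ℝ) ^ n * (B + s : ℝ) ^ s * (n + s).factorial := by gcongr
      _ < K * (n.factorial * s.factorial) * (B : ℝ) ^ (n + s) := h4
      _ ≤ K * (n.factorial * s.factorial) *
          (((B + (n + s)).choose (n + s) : ℝ) * (n + s).factorial) := by gcongr
      _ = _ := by ring
  exact_mod_cast h5

section Bidegree

variable {α β : Type*} [Fintype α] [Fintype β]

/-- Exponent vectors in two blocks of variables, of degree at most `a` in the first block and at
most `b` in the second. -/
def biExp (α β : Type*) [Fintype α] [Fintype β] (a b : ℕ) : Set (α ⊕ β →₀ ℕ) :=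
  {m | ∑ i, m (.inl i) ≤ a ∧ ∑ i, m (.inr i) ≤ b}

/-- Real polynomials in two blocks of variables, of degree at most `a` in the first block and at
most `b` in the second. -/
noncomputable def biDeg (α β : Type*) [Fintype α] [Fintype β] (a b : ℕ) :
    Submodule ℝ (MvPolynomial (α ⊕ β) ℝ) :=
  restrictSupport ℝ (biExp α β a b)

lemma biDeg_mono {a b a' b' : ℕ} (ha : a ≤ a') (hb : b ≤ b') :
    biDeg α β a b ≤ biDeg α β a' b' :=
  restrictSupport_mono ℝ fun _ hm => ⟨hm.1.trans ha, hm.2.trans hb⟩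

lemma mul_mem_biDeg {a b a' b' : ℕ} {p q : MvPolynomial (α ⊕ β) ℝ}
    (hp : p ∈ biDeg α β a b) (hq : q ∈ biDeg α β a' b') : p * q ∈ biDeg α β (a + a') (b + b') := by
  have h := Submodule.mul_mem_mul hp hq
  rw [biDeg, biDeg, ← restrictSupport_add ℝ] at h
  refine restrictSupport_mono ℝ ?_ h
  rintro _ ⟨m, hm, m', hm', rfl⟩
  simp only [biExp, Set.mem_ofPred_eq, Finsupp.add_apply, Finset.sum_add_distrib]
  exact ⟨add_le_add hm.1 hm'.1, add_le_add hm.2 hm'.2⟩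

lemma C_mem_biDeg (c : ℝ) : C c ∈ biDeg α β 0 0 := by
  refine (monomial_mem_restrictSupport ℝ).2 (Or.inl ?_)
  simp [biExp]

lemma one_mem_biDeg : (1 : MvPolynomial (α ⊕ β) ℝ) ∈ biDeg α β 0 0 := by
  simpa using C_mem_biDeg (α := α) (β := β) 1

lemma pow_mem_biDeg {a b : ℕ} {p : MvPolynomial (α ⊕ β) ℝ} (hp : p ∈ biDeg α β a b) (e : ℕ) :
    p ^ e ∈ biDeg α β (a * e) (b * e) := by
  induction e with
  | zero => simpa using one_mem_biDeg
  | succ e ih => rw [pow_succ, mul_add, mul_add, mul_one, mul_one]; exact mul_mem_biDeg ih hp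

lemma prod_mem_biDeg {ι : Type*} (S : Finset ι) (a b : ι → ℕ) (p : ι → MvPolynomial (α ⊕ β) ℝ)
    (hp : ∀ i, p i ∈ biDeg α β (a i) (b i)) :
    ∏ i ∈ S, p i ∈ biDeg α β (∑ i ∈ S, a i) (∑ i ∈ S, b i) := by
  classical
  induction S using Finset.induction_on with
  | empty => simpa using one_mem_biDeg
  | insert i S hi ih =>
    rw [Finset.prod_insert hi, Finset.sum_insert hi, Finset.sum_insert hi]
    exact mul_mem_biDeg (hp i) ih

open Classical in
lemma X_inl_mem_biDeg (i : α) : X (Sum.inl i) ∈ biDeg α β 1 0 := by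
  refine (monomial_mem_restrictSupport ℝ).2 (Or.inl ?_)
  simp [biExp, Finsupp.single_apply]

open Classical in
lemma X_inr_mem_biDeg (i : β) : X (Sum.inr i) ∈ biDeg α β 0 1 := by
  refine (monomial_mem_restrictSupport ℝ).2 (Or.inl ?_)
  simp [biExp, Finsupp.single_apply]

lemma rename_inl_mem_biDeg (p : MvPolynomial α ℝ) {d : ℕ} (hp : p.totalDegree ≤ d) :
    rename Sum.inl p ∈ biDeg α β d 0 := by
  classical
  rw [biDeg, mem_restrictSupport_iff]
  intro m hm
  rw [Finset.mem_coe, support_rename_of_injective Sum.inl_injective, Finset.mem_image] at hm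
  obtain ⟨m, hm, rfl⟩ := hm
  constructor
  · simp_rw [Finsupp.mapDomain_apply Sum.inl_injective]
    refine le_trans (le_of_eq ?_) ((le_totalDegree hm).trans hp)
    rw [Finsupp.sum_fintype _ _ (fun _ => rfl)]
  · refine le_of_eq (Finset.sum_eq_zero fun i _ => ?_)
    exact Finsupp.mapDomain_of_notMem_range _ _ (by simp)

lemma finrank_biDeg (a b : ℕ) : Module.finrank ℝ (biDeg α β a b) =
    (a + Fintype.card α).choose (Fintype.card α) *
      (b + Fintype.card β).choose (Fintype.card β) := by
  classical
  have e : biExp α β a b ≃ (simplex α a) × (simplex β b) :=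
    { toFun := fun m => (⟨(Finsupp.sumFinsuppEquivProdFinsupp m.1).1, mem_simplex.2 m.2.1⟩,
        ⟨(Finsupp.sumFinsuppEquivProdFinsupp m.1).2, mem_simplex.2 m.2.2⟩)
      invFun := fun p => ⟨Finsupp.sumFinsuppEquivProdFinsupp.symm (p.1.1, p.2.1),
        by simpa [biExp] using ⟨mem_simplex.1 p.1.2, mem_simplex.1 p.2.2⟩⟩
      left_inv := fun m => by ext; simp
      right_inv := fun p => by ext <;> simp }
  rw [biDeg, Module.finrank_eq_nat_card_basis (basisRestrictSupport ℝ (biExp α β a b)),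
    Nat.card_congr e, Nat.card_prod]
  simp [card_simplex]

instance (a b : ℕ) : Module.Finite ℝ (biDeg α β a b) := by
  apply Module.finite_of_finrank_pos
  rw [finrank_biDeg]
  exact Nat.mul_pos (Nat.choose_pos (by omega)) (Nat.choose_pos (by omega))

end Bidegree

/-! ### Linear relations and critical points -/

/-- Counting dimensions: more than `(n + s).choose n * d ^ n` powers of a linear form `ℓ` in the
first block are linearly dependent over the polynomials in `n + s` given polynomials of bidegree
`(d, 1)`. The coefficients of the relation have degree at most `B`, with `B` depending only on the
numerical data. -/
lemma exists_relation {α β : Type*} [Fintype α] [Fintype β] (d K : ℕ)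
    (hK : (Fintype.card α + Fintype.card β).choose (Fintype.card α) * d ^ Fintype.card α < K) :
    ∃ B : ℕ, ∀ (E : α ⊕ β → MvPolynomial (α ⊕ β) ℝ) (ℓ : MvPolynomial (α ⊕ β) ℝ),
      (∀ i, E i ∈ biDeg α β d 1) → ℓ ∈ biDeg α β 1 0 →
      ∃ P : Fin K → MvPolynomial (α ⊕ β) ℝ, (∃ j, P j ≠ 0) ∧ (∀ j i, (P j).degreeOf i ≤ B) ∧
        ∑ j, aeval E (P j) * ℓ ^ (j : ℕ) = 0 := by
  classical
  obtain ⟨B, hB⟩ := exists_dim_lt _ (Fintype.card β) d K hK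
  refine ⟨B, fun E ℓ hE hℓ => ?_⟩
  have hmem : ∀ q : Fin K × simplex (α ⊕ β) B,
      aeval E (monomial q.2.1 (1 : ℝ)) * ℓ ^ (q.1 : ℕ) ∈ biDeg α β (d * B + K) B := by
    rintro ⟨j, b, hb⟩
    rw [mem_simplex] at hb
    have h1 : aeval E (monomial b (1 : ℝ)) ∈ biDeg α β (d * B) B := by
      rw [aeval_monomial, map_one, one_mul, Finsupp.prod_fintype _ _ (fun _ => pow_zero _)]
      have := prod_mem_biDeg (α := α) (β := β) Finset.univ (fun i => d * b i) (fun i => 1 * b i)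
        (fun i => E i ^ b i) (fun i => pow_mem_biDeg (hE i) (b i))
      refine biDeg_mono ?_ ?_ this
      · rw [← Finset.mul_sum]; exact Nat.mul_le_mul_left _ hb
      · simpa using hb
    have h2 := mul_mem_biDeg h1 (pow_mem_biDeg hℓ j)
    exact biDeg_mono (by have := j.2; omega) (by simp) h2
  have hdep : ¬ LinearIndependent ℝ (fun q : Fin K × simplex (α ⊕ β) B =>
      (⟨_, hmem q⟩ : biDeg α β (d * B + K) B)) := by
    intro hli
    have h := hli.fintype_card_le_finrank
    rw [finrank_biDeg, Fintype.card_prod, Fintype.card_fin, Fintype.card_coe, card_simplex,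
      Fintype.card_sum] at h
    omega
  rw [Fintype.not_linearIndependent_iff] at hdep
  obtain ⟨g, hg, ⟨j₀, b₀⟩, hne⟩ := hdep
  have hcoeff : ∀ j (b : simplex (α ⊕ β) B),
      coeff b.1 (∑ b : simplex (α ⊕ β) B, monomial b.1 (g (j, b))) = g (j, b) := by
    intro j b
    simp [coeff_sum, coeff_monomial]
  refine ⟨fun j => ∑ b : simplex (α ⊕ β) B, monomial b.1 (g (j, b)), ⟨j₀, fun h => hne ?_⟩, ?_, ?_⟩
  · simpa only [coeff_zero, hcoeff] using congrArg (coeff b₀.1) h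
  · intro j i
    refine (degreeOf_sum_le i _ _).trans (Finset.sup_le fun b _ => ?_)
    refine (degreeOf_le_iff).2 fun m hm => ?_
    have := support_monomial_subset hm
    rw [Finset.mem_singleton] at this
    rw [this]
    exact (Finset.single_le_sum (f := fun i => b.1 i) (fun _ _ => Nat.zero_le _)
      (Finset.mem_univ i)).trans (mem_simplex.1 b.2)
  · have hg' := congrArg Subtype.val hg
    simp only [AddSubmonoidClass.coe_finsetSum, Submodule.coe_smul, ZeroMemClass.coe_zero] at hg'
    rw [Fintype.sum_prod_type] at hg'
    rw [← hg']
    refine Finset.sum_congr rfl fun j _ => ?_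
    rw [map_sum, Finset.sum_mul]
    refine Finset.sum_congr rfl fun b _ => ?_
    rw [← smul_mul_assoc, ← map_smul, smul_monomial, smul_eq_mul, mul_one]

/-- The derivative of a polynomial function along a coordinate axis. -/
lemma hasDerivAt_eval_update {n : ℕ} (p : MvPolynomial (Fin n) ℝ) (x : Fin n → ℝ) (j : Fin n) :
    HasDerivAt (fun τ => eval (Function.update x j τ) p) (eval x (pderiv j p)) (x j) := by
  induction p using MvPolynomial.induction_on with
  | C a => simpa using hasDerivAt_const (x j) a
  | add p q hp hq => simpa only [map_add] using hp.fun_add hq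
  | mul_X p i hp =>
    have hX : HasDerivAt (fun τ => Function.update x j τ i) (if i = j then 1 else 0) (x j) := by
      by_cases h : i = j
      · subst h; simpa using hasDerivAt_id' (x i)
      · simpa [h] using hasDerivAt_const (x j) (x i)
    simp only [map_mul, eval_X]
    refine (hp.fun_mul hX).congr_deriv ?_
    rw [Derivation.leibniz, pderiv_X]
    by_cases h : i = j
    · subst h; simp; ring
    · simp [h]; ring

lemma abs_eval_le_exp {n : ℕ} (p : MvPolynomial (Fin n) ℝ) :
    ∃ A D : ℝ, 0 ≤ A ∧ 0 ≤ D ∧ ∀ x : Fin n → ℝ, |eval x p| ≤ A * Real.exp (D * ∑ j, |x j|) := by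
  induction p using MvPolynomial.induction_on with
  | C a => exact ⟨|a|, 0, abs_nonneg _, le_rfl, fun x => by simp⟩
  | add p q hp hq =>
    obtain ⟨A, D, hA, hD, h⟩ := hp
    obtain ⟨A', D', hA', hD', h'⟩ := hq
    refine ⟨A + A', max D D', by positivity, by positivity, fun x => ?_⟩
    have hs : 0 ≤ ∑ j, |x j| := Finset.sum_nonneg fun _ _ => abs_nonneg _
    rw [map_add, add_mul]
    refine (abs_add_le _ _).trans (add_le_add ((h x).trans ?_) ((h' x).trans ?_))
    · gcongr; exact le_max_left _ _
    · gcongr; exact le_max_right _ _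
  | mul_X p i hp =>
    obtain ⟨A, D, hA, hD, h⟩ := hp
    refine ⟨A, D + 1, hA, by positivity, fun x => ?_⟩
    have hi : |x i| ≤ Real.exp (∑ j, |x j|) := by
      have h1 : |x i| ≤ ∑ j, |x j| :=
        Finset.single_le_sum (f := fun j => |x j|) (fun _ _ => abs_nonneg _) (Finset.mem_univ i)
      linarith [Real.add_one_le_exp (∑ j, |x j|)]
    rw [map_mul, eval_X, abs_mul, add_mul, one_mul, Real.exp_add, ← mul_assoc]
    exact mul_le_mul (h x) hi (abs_nonneg _) (by positivity)

open Filter Topology in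
lemma tendsto_eval_mul_gaussian {n : ℕ} (p : MvPolynomial (Fin n) ℝ) (a : Fin n → ℝ) :
    Tendsto (fun x : Fin n → ℝ => eval x p * Real.exp (-∑ j, (x j ^ 2 + a j * x j)))
      (cocompact _) (𝓝 0) := by
  obtain ⟨A, D, hA, hD, h⟩ := abs_eval_le_exp p
  set M : ℝ := ∑ j, (D + |a j| + 1) ^ 2 with hM
  have hlim : Tendsto (fun x : Fin n → ℝ => A * Real.exp M * Real.exp (-‖x‖))
      (cocompact _) (𝓝 (A * Real.exp M * 0)) :=
    (Real.tendsto_exp_neg_atTop_nhds_zero.comp (tendsto_norm_cocompact_atTop)).const_mul _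
  rw [mul_zero] at hlim
  refine squeeze_zero_norm (fun x => ?_) hlim
  rw [Real.norm_eq_abs, abs_mul, Real.abs_exp]
  have hnorm : ‖x‖ ≤ ∑ j, |x j| := by
    refine (pi_norm_le_iff_of_nonneg (Finset.sum_nonneg fun _ _ => abs_nonneg _)).2 fun i => ?_
    exact Finset.single_le_sum (f := fun j => |x j|) (fun _ _ => abs_nonneg _) (Finset.mem_univ i)
  calc |eval x p| * Real.exp (-∑ j, (x j ^ 2 + a j * x j))
      ≤ A * Real.exp (D * ∑ j, |x j|) * Real.exp (-∑ j, (x j ^ 2 + a j * x j)) := by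
        gcongr; exact h x
    _ = A * Real.exp (∑ j, (D * |x j| - (x j ^ 2 + a j * x j))) := by
        rw [mul_assoc, ← Real.exp_add, Finset.mul_sum, ← Finset.sum_neg_distrib,
          ← Finset.sum_add_distrib]
        rfl
    _ ≤ A * Real.exp (M - ‖x‖) := by
        gcongr
        refine le_trans ?_ (sub_le_sub_left hnorm M)
        rw [hM, ← Finset.sum_sub_distrib]
        refine Finset.sum_le_sum fun j _ => ?_
        have h1 : -(a j * x j) ≤ |a j| * |x j| := by
          rw [← abs_mul]; exact neg_le_abs _
        rw [← sq_abs (x j)]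
        nlinarith [sq_nonneg (2 * |x j| - (D + |a j| + 1)), sq_nonneg (D + |a j| + 1)]
    _ = A * Real.exp M * Real.exp (-‖x‖) := by rw [sub_eq_add_neg, Real.exp_add, mul_assoc]

open Filter Topology in
/-- In the sign cell of `u`, the weighted barrier
`∑ 2 (κ i + 1) log |f i| - ∑ (x j ^ 2 + a j x j)` has a maximum, hence a critical point. The proof
maximises its exponential, a polynomial times a Gaussian, over the closed cell; it vanishes on the
boundary and at infinity. -/
lemma exists_critical {n : ℕ} {β : Type*} [Fintype β] (f : β → MvPolynomial (Fin n) ℝ)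
    (u : Fin n → ℝ) (hu : ∀ i, eval u (f i) ≠ 0) (κ : β → ℕ) (a : Fin n → ℝ) :
    ∃ x : Fin n → ℝ, (∀ i, 0 < eval u (f i) * eval x (f i)) ∧
      ∀ j, ∑ i, (2 * (κ i + 1) : ℕ) / eval x (f i) * eval x (pderiv j (f i)) - 2 * x j = a j := by
  classical
  set Q : MvPolynomial (Fin n) ℝ := ∏ i, f i ^ (2 * (κ i + 1)) with hQ
  set h : (Fin n → ℝ) → ℝ := fun x => eval x Q * Real.exp (-∑ j, (x j ^ 2 + a j * x j)) with hh
  have hQe : ∀ x, eval x Q = ∏ i, eval x (f i) ^ (2 * (κ i + 1)) := fun x => by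
    simp [hQ, map_prod]
  have hQnn : ∀ x, 0 ≤ eval x Q := fun x => by
    rw [hQe]; exact Finset.prod_nonneg fun i _ => (even_two_mul _).pow_nonneg _
  have hu0 : 0 < h u := by
    refine mul_pos (lt_of_le_of_ne (hQnn u) (Ne.symm ?_)) (Real.exp_pos _)
    rw [hQe]; exact Finset.prod_ne_zero_iff.2 fun i _ => pow_ne_zero _ (hu i)
  have hcontf : ∀ p : MvPolynomial (Fin n) ℝ, Continuous fun x => eval x p :=
    fun p => p.continuous_eval
  have hcont : Continuous h := by
    refine (hcontf Q).mul (Real.continuous_exp.comp ?_)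
    fun_prop
  set S : Set (Fin n → ℝ) := {x | ∀ i, 0 ≤ eval u (f i) * eval x (f i)} with hS
  have hSc : IsClosed S := by
    rw [hS, Set.ofPred_forall]
    exact isClosed_iInter fun i => isClosed_le continuous_const (continuous_const.mul (hcontf _))
  have huS : u ∈ S := fun i => mul_self_nonneg _
  have hev : ∀ᶠ x in cocompact (Fin n → ℝ) ⊓ 𝓟 S, h x ≤ h u :=
    ((tendsto_eval_mul_gaussian Q a).eventually_le_const hu0).filter_mono inf_le_left
  obtain ⟨x, hxS, hmax⟩ := hcont.continuousOn.exists_isMaxOn' hSc huS hev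
  have hx0 : 0 < h x := hu0.trans_le (hmax huS)
  have hfx : ∀ i, eval x (f i) ≠ 0 := by
    intro i hi
    have : eval x Q = 0 := by
      rw [hQe]; exact Finset.prod_eq_zero (Finset.mem_univ i) (by rw [hi]; simp)
    simp [hh, this] at hx0
  have hpos : ∀ i, 0 < eval u (f i) * eval x (f i) := fun i =>
    lt_of_le_of_ne (hxS i) (Ne.symm (mul_ne_zero (hu i) (hfx i)))
  refine ⟨x, hpos, fun j => ?_⟩
  have hloc : IsLocalMax h x := by
    refine hmax.isLocalMax ?_
    have : ∀ᶠ y in 𝓝 x, ∀ i, 0 < eval u (f i) * eval y (f i) :=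
      eventually_all.2 fun i =>
        (continuous_const.mul (hcontf (f i))).continuousAt.eventually_const_lt (hpos i)
    exact this.mono fun y hy i => (hy i).le
  have hline : Continuous fun τ : ℝ => Function.update x j τ := by fun_prop
  have hloc' : IsLocalMax (fun τ => h (Function.update x j τ)) (x j) := by
    have ht : Tendsto (fun τ : ℝ => Function.update x j τ) (𝓝 (x j)) (𝓝 x) := by
      simpa using hline.tendsto (x j)
    have := ht.eventually hloc
    simpa [IsLocalMax, IsMaxFilter] using this
  have hd0 := hloc'.deriv_eq_zero
  have hlog : logDeriv (fun τ => h (Function.update x j τ)) (x j) = 0 := by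
    rw [logDeriv_apply, hd0, zero_div]
  have hdf : ∀ p : MvPolynomial (Fin n) ℝ,
      DifferentiableAt ℝ (fun τ => eval (Function.update x j τ) p) (x j) :=
    fun p => (hasDerivAt_eval_update p x j).differentiableAt
  have hquad : HasDerivAt (fun τ => -∑ l, (Function.update x j τ l ^ 2 +
      a l * Function.update x j τ l)) (-(2 * x j + a j)) (x j) := by
    have := hasDerivAt_eval_update (-∑ l, (X l ^ 2 + C (a l) * X l)) x j
    convert this using 1
    · ext τ; simp
    · simp [Derivation.leibniz_pow, pderiv_X, Finset.sum_add_distrib, Pi.single_apply]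
  have hexp := hquad.exp
  have e1 : (fun τ => h (Function.update x j τ)) = fun τ =>
      (∏ i, eval (Function.update x j τ) (f i) ^ (2 * (κ i + 1))) *
      Real.exp (-∑ l, (Function.update x j τ l ^ 2 + a l * Function.update x j τ l)) := by
    ext τ; rw [hh]; simp only [hQe]
  have hne : ∀ i ∈ Finset.univ, eval (Function.update x j (x j)) (f i) ^ (2 * (κ i + 1)) ≠ 0 :=
    fun i _ => by rw [Function.update_eq_self]; exact pow_ne_zero _ (hfx i)
  have hdpow : ∀ i ∈ Finset.univ, DifferentiableAt ℝ
      (fun τ => eval (Function.update x j τ) (f i) ^ (2 * (κ i + 1))) (x j) :=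
    fun i _ => (hdf (f i)).fun_pow _
  have hmul := logDeriv_mul (g := fun τ => Real.exp (-∑ l, (Function.update x j τ l ^ 2 +
    a l * Function.update x j τ l))) (x j) (Finset.prod_ne_zero_iff.2 hne) (Real.exp_ne_zero _)
    (DifferentiableAt.fun_finsetProd hdpow) hexp.differentiableAt
  rw [e1, hmul, logDeriv_prod hne hdpow] at hlog
  simp only [logDeriv_fun_pow (hdf _)] at hlog
  rw [logDeriv_apply, hexp.deriv, mul_div_cancel_left₀ _ (Real.exp_ne_zero _)] at hlog
  simp only [logDeriv_apply, (hasDerivAt_eval_update _ x j).deriv, Function.update_eq_self]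
    at hlog
  have : ∀ i, ((2 * (κ i + 1) : ℕ) : ℝ) / eval x (f i) * eval x (pderiv j (f i)) =
      ((2 * (κ i + 1) : ℕ) : ℝ) * (eval x (pderiv j (f i)) / eval x (f i)) := fun i => by ring
  simp only [this]
  linarith

/-! ### Counting sign vectors -/

lemma totalDegree_pderiv_le {n : ℕ} (p : MvPolynomial (Fin n) ℝ) (j : Fin n) :
    (pderiv j p).totalDegree ≤ p.totalDegree := by
  conv_lhs => rw [p.as_sum, map_sum]
  refine totalDegree_finsetSum_le fun m hm => ?_
  rw [pderiv_monomial]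
  refine (totalDegree_monomial_le _ _).trans (le_trans ?_ (le_totalDegree hm))
  rw [Finsupp.sum_fintype _ _ (fun _ => rfl), Finsupp.sum_fintype _ _ (fun _ => rfl)]
  exact Finset.sum_le_sum fun i _ => by simp

lemma eval_aeval {σ τ : Type*} (E : σ → MvPolynomial τ ℝ) (z : τ → ℝ) (p : MvPolynomial σ ℝ) :
    eval z (aeval E p) = eval (fun k => eval z (E k)) p := by
  induction p using MvPolynomial.induction_on with
  | C a => simp
  | add p q hp hq => simp only [map_add, hp, hq]
  | mul_X p i hp => simp only [map_mul, aeval_X, eval_X, hp]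

/-- Finitely many nonzero vectors are simultaneously non-orthogonal to some vector. -/
lemma exists_dot_ne_zero {n : ℕ} {ι : Type*} (S : Finset ι) (v : ι → Fin n → ℝ)
    (hv : ∀ i ∈ S, v i ≠ 0) : ∃ w : Fin n → ℝ, ∀ i ∈ S, ∑ j, v i j * w j ≠ 0 := by
  classical
  have hne : (∏ i ∈ S, ∑ j, C (v i j) * X j : MvPolynomial (Fin n) ℝ) ≠ 0 := by
    refine Finset.prod_ne_zero_iff.2 fun i hi h0 => hv i hi (funext fun j => ?_)
    have := congrArg (eval (Pi.single j 1)) h0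
    simpa [Pi.single_apply] using this
  by_contra! hcon
  refine hne (MvPolynomial.funext fun w => ?_)
  obtain ⟨i, hi, h0⟩ := hcon w
  rw [map_prod, map_zero]
  exact Finset.prod_eq_zero hi (by simpa using h0)

/-- **Warren-type bound** for strict sign patterns: `s` polynomials of degree at most `d` in `n`
variables realise at most `(n + s).choose n * d ^ n` sign vectors without zeros.

Each realised sign cell contains a solution `(x, y)` of `y i * f i x = c i`,
`∑ y i ∂ⱼ f i x - 2 x j = a j` for every `a` and every choice of positive even integers `c`; these
are `n + s` equations of bidegree `(d, 1)`, and the relation of `exists_relation`, evaluated at a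
point `(a, c)` where some coefficient does not vanish, is a nonzero univariate polynomial whose
roots are the distinct values of a linear form at the solutions. -/
theorem card_sign_cells_le {n : ℕ} {β : Type*} [Fintype β] {d : ℕ} (hd : 1 ≤ d)
    (f : β → MvPolynomial (Fin n) ℝ) (hf : ∀ i, (f i).totalDegree ≤ d) {N : ℕ}
    (u : Fin N → Fin n → ℝ) (hu : ∀ l i, eval (u l) (f i) ≠ 0)
    (hsep : ∀ l l', l ≠ l' → ∃ i, eval (u l) (f i) * eval (u l') (f i) < 0) :
    N ≤ (n + Fintype.card β).choose n * d ^ n := by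
  classical
  by_contra! hN
  obtain ⟨B, hB⟩ := exists_relation (α := Fin n) (β := β) d N (by simpa using hN)
  choose x hxpos hxcrit using fun (γ : Fin n ⊕ β → Fin (B + 1)) (l : Fin N) =>
    exists_critical f (u l) (hu l) (fun i => γ (.inr i)) (fun j => ((γ (.inl j) : ℕ) : ℝ))
  have hxne : ∀ γ l l', l ≠ l' → x γ l ≠ x γ l' := by
    intro γ l l' hll h
    obtain ⟨i, hi⟩ := hsep l l' hll
    have h1 := hxpos γ l i
    have h2 := hxpos γ l' i
    rw [h] at h1
    nlinarith [mul_pos h1 h2, sq_nonneg (eval (x γ l') (f i))]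
  obtain ⟨w, hw⟩ := exists_dot_ne_zero
    ((Finset.univ : Finset ((Fin n ⊕ β → Fin (B + 1)) × Fin N × Fin N)).filter
      fun q => q.2.1 ≠ q.2.2) (fun q j => x q.1 q.2.1 j - x q.1 q.2.2 j) (by
      rintro ⟨γ, l, l'⟩ hq h
      rw [Finset.mem_filter] at hq
      exact hxne γ l l' hq.2 (funext fun j => sub_eq_zero.1 (congrFun h j)))
  set E : Fin n ⊕ β → MvPolynomial (Fin n ⊕ β) ℝ := Sum.elim
    (fun j => ∑ i, X (.inr i) * rename Sum.inl (pderiv j (f i)) - C 2 * X (.inl j))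
    (fun i => X (.inr i) * rename Sum.inl (f i)) with hE
  set ℓ : MvPolynomial (Fin n ⊕ β) ℝ := ∑ j, C (w j) * X (.inl j) with hℓ
  have hEdeg : ∀ k, E k ∈ biDeg (Fin n) β d 1 := by
    rintro (j | i)
    · refine Submodule.sub_mem _ (Submodule.sum_mem _ fun i _ => ?_) ?_
      · refine biDeg_mono (by omega) (by omega) (mul_mem_biDeg (X_inr_mem_biDeg i)
          (rename_inl_mem_biDeg _ ((totalDegree_pderiv_le (f i) j).trans (hf i))))
      · exact biDeg_mono (by omega) (by omega) (mul_mem_biDeg (C_mem_biDeg 2) (X_inl_mem_biDeg j))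
    · exact biDeg_mono (by omega) (by omega) (mul_mem_biDeg (X_inr_mem_biDeg i)
          (rename_inl_mem_biDeg _ (hf i)))
  have hℓdeg : ℓ ∈ biDeg (Fin n) β 1 0 := Submodule.sum_mem _ fun j _ =>
    biDeg_mono (by omega) (by omega) (mul_mem_biDeg (C_mem_biDeg (w j)) (X_inl_mem_biDeg j))
  obtain ⟨P, ⟨j₀, hj₀⟩, hPdeg, hP⟩ := hB E ℓ hEdeg hℓdeg
  -- the grid of right-hand sides `(a, c)`
  set z : (Fin n ⊕ β → Fin (B + 1)) → Fin n ⊕ β → ℝ := fun γ => Sum.elim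
    (fun j => ((γ (.inl j) : ℕ) : ℝ)) (fun i => ((2 * (γ (.inr i) + 1) : ℕ) : ℝ)) with hz
  obtain ⟨γ, hγ⟩ : ∃ γ, eval (z γ) (P j₀) ≠ 0 := by
    by_contra! hcon
    refine hj₀ (eq_zero_of_eval_zero_at_prod_finset (P j₀)
      (fun k => Finset.univ.image fun b : Fin (B + 1) =>
        (Sum.elim (fun _ => ((b : ℕ) : ℝ)) (fun _ => ((2 * (b + 1) : ℕ) : ℝ)) k : ℝ))
      (fun k => ?_) fun y hy => ?_)
    · rw [Finset.card_image_of_injective, Finset.card_univ, Fintype.card_fin]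
      · exact Nat.lt_succ_of_le (hPdeg j₀ k)
      · intro b b' hbb
        rcases k with j | i
        · simpa [Fin.ext_iff] using hbb
        · simpa [Fin.ext_iff] using hbb
    · simp only [Finset.mem_image, Finset.mem_univ, true_and] at hy
      choose γ hγ using hy
      have : y = z γ := by
        funext k
        rw [← hγ k]
        rcases k with j | i <;> rfl
      rw [this, hcon]
  set p : Polynomial ℝ := ∑ j : Fin N, Polynomial.C (eval (z γ) (P j)) * Polynomial.X ^ (j : ℕ)
    with hp
  have hp0 : p = 0 := by
    refine Polynomial.eq_zero_of_natDegree_lt_card_of_eval_eq_zero p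
      (f := fun l => ∑ j, x γ l j * w j) ?_ ?_ ?_
    · intro l l' hll
      by_contra hne
      refine hw (γ, l, l') (by simpa using hne) ?_
      simp only [sub_mul, Finset.sum_sub_distrib]
      exact sub_eq_zero.2 hll
    · intro l
      set pt : Fin n ⊕ β → ℝ := Sum.elim (x γ l)
        (fun i => ((2 * (γ (.inr i) + 1) : ℕ) : ℝ) / eval (x γ l) (f i)) with hpt
      have hren : ∀ q : MvPolynomial (Fin n) ℝ, eval pt (rename Sum.inl q) = eval (x γ l) q := by
        intro q
        rw [eval_rename]
        rfl
      have hEz : (fun k => eval pt (E k)) = z γ := by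
        funext k
        rcases k with j | i
        · simp only [hE, Sum.elim_inl, map_sub, map_sum, map_mul, eval_X, eval_C, hren]
          exact hxcrit γ l j
        · simp only [hE, Sum.elim_inr, map_mul, eval_X, hren]
          have : eval (x γ l) (f i) ≠ 0 := fun h => by simpa [h] using hxpos γ l i
          exact div_mul_cancel₀ _ this
      have hℓe : eval pt ℓ = ∑ j, x γ l j * w j := by
        simp only [hℓ, map_sum, map_mul, eval_X, eval_C]
        exact Finset.sum_congr rfl fun j _ => mul_comm _ _
      have := congrArg (eval pt) hP
      simp only [map_sum, map_mul, map_pow, eval_aeval, hEz, hℓe, map_zero] at this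
      simpa [hp, Polynomial.eval_finsetSum] using this
    · rw [Fintype.card_fin]
      have hlt : p.degree < N := by
        refine (Polynomial.degree_sum_le _ _).trans_lt ?_
        refine (Finset.sup_lt_iff (WithBot.bot_lt_coe N)).2 fun j _ => ?_
        exact (Polynomial.degree_C_mul_X_pow_le _ _).trans_lt (Nat.cast_lt.2 j.2)
      by_cases h0 : p = 0
      · rw [h0, Polynomial.natDegree_zero]; exact j₀.pos
      · exact (Polynomial.natDegree_lt_iff_degree_lt h0).2 hlt
  refine hγ ?_
  have := congrArg (fun q => Polynomial.coeff q j₀) hp0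
  simpa [hp, Polynomial.finsetSum_coeff, Polynomial.coeff_C_mul, Polynomial.coeff_X_pow,
    Fin.val_inj] using this

/-- Bound on the number of points with pairwise distinct sign vectors, zeros allowed: each
polynomial `f i` is replaced by `f i - ε` and `f i + ε`, with `ε` smaller than all nonzero values
that occur. -/
theorem card_sign_vectors_le {n : ℕ} {β : Type*} [Fintype β] {d : ℕ} (hd : 1 ≤ d)
    (f : β → MvPolynomial (Fin n) ℝ) (hf : ∀ i, (f i).totalDegree ≤ d) {N : ℕ}
    (u : Fin N → Fin n → ℝ)
    (hsep : ∀ l l', (∀ i, Real.sign (eval (u l) (f i)) = Real.sign (eval (u l') (f i))) → l = l') :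
    N ≤ (n + 2 * Fintype.card β).choose n * d ^ n := by
  classical
  obtain ⟨ε, hε, hεle⟩ : ∃ ε : ℝ, 0 < ε ∧ ∀ l i, eval (u l) (f i) ≠ 0 → ε < |eval (u l) (f i)| := by
    have : ∀ᶠ ε in nhdsWithin (0 : ℝ) (Set.Ioi 0),
        ∀ l i, eval (u l) (f i) ≠ 0 → ε < |eval (u l) (f i)| := by
      refine Filter.eventually_all.2 fun l => Filter.eventually_all.2 fun i => ?_
      by_cases h : eval (u l) (f i) = 0
      · simp [h]
      · exact ((eventually_lt_nhds (abs_pos.2 h)).filter_mono nhdsWithin_le_nhds).mono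
          fun _ h' _ => h'
    obtain ⟨ε, h1, h2⟩ := (this.and self_mem_nhdsWithin).exists
    exact ⟨ε, h2, h1⟩
  have hg := card_sign_cells_le hd (β := β ⊕ β)
    (Sum.elim (fun i => f i - C ε) (fun i => f i + C ε)) ?_ u ?_ ?_
  · simpa [two_mul] using hg
  · rintro (i | i)
    · exact (totalDegree_sub_C_le _ _).trans (hf i)
    · exact (totalDegree_add _ _).trans (max_le (hf i) (by simp))
  · rintro l (i | i) h
    · simp only [Sum.elim_inl, map_sub, eval_C] at h
      have := hεle l i (by linarith)
      rw [sub_eq_zero.1 h, abs_of_pos hε] at this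
      exact lt_irrefl _ this
    · simp only [Sum.elim_inr, map_add, eval_C] at h
      have h' : eval (u l) (f i) = -ε := by linarith
      have := hεle l i (by linarith)
      rw [h', abs_neg, abs_of_pos hε] at this
      exact lt_irrefl _ this
  · intro l l' hll
    by_contra! hcon
    refine hll (hsep l l' fun i => ?_)
    have h1 := hcon (.inl i)
    have h2 := hcon (.inr i)
    simp only [Sum.elim_inl, Sum.elim_inr, map_sub, map_add, eval_C] at h1 h2
    have a1 := hεle l i
    have a2 := hεle l' i
    generalize eval (u l) (f i) = a at *
    generalize eval (u l') (f i) = b at *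
    rcases lt_trichotomy a 0 with ha | ha | ha <;> rcases lt_trichotomy b 0 with hb | hb | hb
    · rw [Real.sign_of_neg ha, Real.sign_of_neg hb]
    · have := a1 ha.ne
      rw [abs_of_neg ha] at this
      nlinarith
    · have := a1 ha.ne
      rw [abs_of_neg ha] at this
      nlinarith
    · have := a2 hb.ne
      rw [abs_of_neg hb] at this
      nlinarith
    · rw [ha, hb]
    · have := a2 hb.ne'
      rw [abs_of_pos hb] at this
      nlinarith
    · have := a1 ha.ne'
      rw [abs_of_pos ha] at this
      nlinarith
    · have := a1 ha.ne'
      rw [abs_of_pos ha] at this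
      nlinarith
    · rw [Real.sign_of_pos ha, Real.sign_of_pos hb]

/-! ### Uniform sampling -/

/-- The sign attached to a coin flip: `1` for `true`, `-1` for `false`. -/
def coinSign (b : Bool) : ℝ := if b then 1 else -1

/-- Hoeffding's inequality for Rademacher sums, in counting form. -/
theorem card_flips_le {m : ℕ} {δ : ℝ} (hδ : 0 < δ) (e : Fin m → ℝ) (he : ∀ j, |e j| ≤ 1) :
    ((Finset.univ.filter fun s : Fin m → Bool => δ * m ≤ ∑ j, coinSign (s j) * e j).card : ℝ) ≤
      2 ^ m * Real.exp (-(δ ^ 2 * m / 2)) := by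
  have h1 : ∑ s : Fin m → Bool, Real.exp (δ * ∑ j, coinSign (s j) * e j) ≤
      2 ^ m * Real.exp (δ ^ 2 * m / 2) := by
    have h2 : ∀ s : Fin m → Bool, Real.exp (δ * ∑ j, coinSign (s j) * e j) =
        ∏ j, Real.exp (δ * (coinSign (s j) * e j)) := by
      intro s
      rw [Finset.mul_sum, Real.exp_sum]
    have h3 : ∏ j : Fin m, ∑ b : Bool, Real.exp (δ * (coinSign b * e j)) =
        ∑ s : Fin m → Bool, ∏ j, Real.exp (δ * (coinSign (s j) * e j)) := by
      rw [Finset.prod_univ_sum, Fintype.piFinset_univ]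
    simp_rw [h2]
    rw [← h3]
    calc ∏ j : Fin m, ∑ b : Bool, Real.exp (δ * (coinSign b * e j))
        ≤ ∏ j : Fin m, (2 * Real.exp (δ ^ 2 / 2)) := by
          refine Finset.prod_le_prod (fun j _ => Finset.sum_nonneg fun b _ => (Real.exp_pos _).le)
            fun j _ => ?_
          have h4 : ∑ b : Bool, Real.exp (δ * (coinSign b * e j)) = 2 * Real.cosh (δ * e j) := by
            rw [Real.cosh_eq]
            simp [coinSign]
            ring
          rw [h4]
          have h5 := Real.cosh_le_exp_half_sq (δ * e j)
          have h6 : Real.exp ((δ * e j) ^ 2 / 2) ≤ Real.exp (δ ^ 2 / 2) := by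
            apply Real.exp_le_exp.2
            have := (sq_le_one_iff_abs_le_one (e j)).2 (he j)
            nlinarith [sq_nonneg δ]
          linarith
      _ = 2 ^ m * Real.exp (δ ^ 2 * m / 2) := by
          rw [Finset.prod_const, mul_pow, ← Real.exp_nat_mul]
          simp
          ring
  have h7 : ((Finset.univ.filter fun s : Fin m → Bool =>
      δ * m ≤ ∑ j, coinSign (s j) * e j).card : ℝ) * Real.exp (δ ^ 2 * m) ≤
      2 ^ m * Real.exp (δ ^ 2 * m / 2) := by
    refine le_trans ?_ h1
    have h9 : ∀ s : Fin m → Bool,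
        (if δ * m ≤ ∑ j, coinSign (s j) * e j then Real.exp (δ ^ 2 * m) else 0) ≤
          Real.exp (δ * ∑ j, coinSign (s j) * e j) := by
      intro s
      split_ifs with hs
      · have h10 := mul_le_mul_of_nonneg_left hs hδ.le
        exact Real.exp_le_exp.2 (by linarith)
      · exact (Real.exp_pos _).le
    have h11 := Finset.sum_le_sum fun (s : Fin m → Bool) (_ : s ∈ Finset.univ) => h9 s
    rwa [← Finset.sum_filter, Finset.sum_const, nsmul_eq_mul] at h11
  have h8 : Real.exp (δ ^ 2 * m / 2) = Real.exp (-(δ ^ 2 * m / 2)) * Real.exp (δ ^ 2 * m) := by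
    rw [← Real.exp_add]
    congr 1
    ring
  rw [h8, ← mul_assoc] at h7
  exact le_of_mul_le_mul_right h7 (Real.exp_pos _)

/-- Exchange the two members of a pair unless the coin shows `true`. -/
def swapBy {Ω : Type*} (b : Bool) (p : Ω × Ω) : Ω × Ω := if b then p else p.swap

theorem sum_flips {Ω : Type*} {m : ℕ} (g : Ω → ℝ) (s : Fin m → Bool) (w : Fin m → Ω × Ω) :
    ∑ j, (g (swapBy (s j) (w j)).1 - g (swapBy (s j) (w j)).2) =
      ∑ j, coinSign (s j) * (g (w j).1 - g (w j).2) := by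
  refine Finset.sum_congr rfl fun j _ => ?_
  cases s j <;> simp [swapBy, coinSign]

/-- Union bound over the traces of the family on a fixed double sample: few of the `2 ^ m`
exchange patterns produce a discrepancy of at least `δ * m` for some member of the family. -/
theorem card_bad_swaps_le {Ω ι : Type*} {m : ℕ} {δ : ℝ} (hδ : 0 < δ) (g : ι → Ω → ℝ)
    (hg : ∀ i ω, g i ω = 0 ∨ g i ω = 1) {G : ℕ} (w : Fin m → Ω × Ω)
    (hfin : (Set.range fun i => fun j : Fin m => (g i (w j).1, g i (w j).2)).Finite)
    (hG : (Set.range fun i => fun j : Fin m => (g i (w j).1, g i (w j).2)).ncard ≤ G) :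
    (Set.ncard {s : Fin m → Bool | ∃ i, δ * m ≤
      ∑ j, (g i (swapBy (s j) (w j)).1 - g i (swapBy (s j) (w j)).2)} : ℝ) ≤
      G * (2 ^ m * Real.exp (-(δ ^ 2 * m / 2))) := by
  classical
  set R := hfin.toFinset with hR
  have hsub : {s : Fin m → Bool | ∃ i, δ * m ≤
      ∑ j, (g i (swapBy (s j) (w j)).1 - g i (swapBy (s j) (w j)).2)} ⊆
      ((R.biUnion fun e => Finset.univ.filter fun s : Fin m → Bool =>
        (∀ j, |(e j).1 - (e j).2| ≤ 1) ∧ δ * m ≤ ∑ j, coinSign (s j) * ((e j).1 - (e j).2) :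
          Finset (Fin m → Bool)) : Set (Fin m → Bool)) := by
    rintro s ⟨i, hi⟩
    rw [sum_flips] at hi
    simp only [Finset.coe_biUnion, Set.mem_iUnion]
    refine ⟨fun j => (g i (w j).1, g i (w j).2), ?_, ?_⟩
    · simp [hR]
    · simp only [Finset.coe_filter, Finset.mem_univ, true_and]
      refine ⟨fun j => ?_, hi⟩
      rcases hg i (w j).1 with h | h <;> rcases hg i (w j).2 with h' | h' <;> simp [h, h']
  have h1 := Set.ncard_le_ncard hsub (Finset.finite_toSet _)
  rw [Set.ncard_coe_finset] at h1
  have h2 : ((R.biUnion fun e => Finset.univ.filter fun s : Fin m → Bool =>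
        (∀ j, |(e j).1 - (e j).2| ≤ 1) ∧
          δ * m ≤ ∑ j, coinSign (s j) * ((e j).1 - (e j).2)).card : ℝ) ≤
      ∑ e ∈ R, 2 ^ m * Real.exp (-(δ ^ 2 * m / 2)) := by
    refine le_trans (Nat.cast_le.2 Finset.card_biUnion_le) ?_
    push_cast
    refine Finset.sum_le_sum fun e _ => ?_
    by_cases he : ∀ j, |(e j).1 - (e j).2| ≤ 1
    · simp only [he, implies_true, true_and]
      exact card_flips_le hδ (fun j => (e j).1 - (e j).2) he
    · simp only [he, false_and, Finset.filter_false, Finset.card_empty, Nat.cast_zero]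
      positivity
  rw [Finset.sum_const, nsmul_eq_mul] at h2
  rw [Set.ncard_eq_toFinset_card _ hfin] at hG
  calc _ ≤ _ := by exact_mod_cast h1
    _ ≤ _ := h2
    _ ≤ _ := by
      have : (R.card : ℝ) ≤ G := by exact_mod_cast hG
      gcongr

theorem measurePreserving_swapBy {Ω : Type*} [MeasurableSpace Ω] (μ : Measure Ω)
    [IsProbabilityMeasure μ] (b : Bool) :
    MeasurePreserving (swapBy b : Ω × Ω → Ω × Ω) (μ.prod μ) (μ.prod μ) := by
  cases b
  · exact Measure.measurePreserving_swap
  · exact MeasurePreserving.id _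

/-- Symmetrization: on a double sample, the probability that some member of the family has
discrepancy at least `δ * m` is governed by the number of traces. -/
theorem measure_discrepancy_le {Ω ι : Type*} [MeasurableSpace Ω] (μ : Measure Ω)
    [IsProbabilityMeasure μ] {m : ℕ} {δ : ℝ} (g : ι → Ω → ℝ) {K : ℝ}
    (hA : MeasurableSet {w : Fin m → Ω × Ω | ∃ i, δ * m ≤ ∑ j, (g i (w j).1 - g i (w j).2)})
    (hK : ∀ w : Fin m → Ω × Ω, (Set.ncard {s : Fin m → Bool | ∃ i, δ * m ≤
      ∑ j, (g i (swapBy (s j) (w j)).1 - g i (swapBy (s j) (w j)).2)} : ℝ) ≤ 2 ^ m * K) :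
    (Measure.pi fun _ : Fin m => μ.prod μ)
      {w | ∃ i, δ * m ≤ ∑ j, (g i (w j).1 - g i (w j).2)} ≤ ENNReal.ofReal K := by
  classical
  set A := {w : Fin m → Ω × Ω | ∃ i, δ * m ≤ ∑ j, (g i (w j).1 - g i (w j).2)} with hAdef
  set P := Measure.pi fun _ : Fin m => μ.prod μ with hP
  have hpres : ∀ s : Fin m → Bool,
      MeasurePreserving (fun (w : Fin m → Ω × Ω) j => swapBy (s j) (w j)) P P :=
    fun s => measurePreserving_pi _ _ fun j => measurePreserving_swapBy μ (s j)
  have h1 : ∑ s : Fin m → Bool, P A =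
      ∫⁻ w, ∑ s : Fin m → Bool, A.indicator 1 (fun j => swapBy (s j) (w j)) ∂P := by
    rw [lintegral_finsetSum]
    · refine Finset.sum_congr rfl fun s _ => ?_
      rw [(hpres s).lintegral_comp (measurable_one.indicator hA), lintegral_indicator_one hA]
    · intro s _
      exact (measurable_one.indicator hA).comp (hpres s).measurable
  have h2 : ∫⁻ w, ∑ s : Fin m → Bool, A.indicator 1 (fun j => swapBy (s j) (w j)) ∂P ≤
      ∫⁻ w, ENNReal.ofReal (2 ^ m * K) ∂P := by
    refine lintegral_mono fun w => ?_
    have h3 : ∑ s : Fin m → Bool, A.indicator (1 : (Fin m → Ω × Ω) → ENNReal) (fun j => swapBy (s j) (w j)) =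
        (Set.ncard {s : Fin m → Bool | (fun j => swapBy (s j) (w j)) ∈ A} : ENNReal) := by
      simp only [Set.indicator_apply, Pi.one_apply]
      rw [Finset.sum_boole, Set.ncard_eq_toFinset_card']
      simp
    rw [h3, ← ENNReal.ofReal_natCast]
    exact ENNReal.ofReal_le_ofReal (hK w)
  rw [← h1] at h2
  have h4 : (2 : ENNReal) ^ m * P A ≤ 2 ^ m * ENNReal.ofReal K := by
    rw [lintegral_const, measure_univ, mul_one, ENNReal.ofReal_mul (by positivity),
      ENNReal.ofReal_pow (by norm_num)] at h2
    simpa using h2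
  exact (ENNReal.mul_le_mul_iff_right (by simp) (by simp)).1 h4

/-- Markov's inequality for the number of sample points landing in a set of measure at
most `a`. -/
theorem measure_few_hits {Ω : Type*} [MeasurableSpace Ω] (μ : Measure Ω)
    [IsProbabilityMeasure μ] {B : Set Ω} (hB : MeasurableSet B) {a δ : ℝ} (ha : 0 ≤ a)
    (hδ : 0 < δ) (had : a + δ ≤ 1) (hμ : μ.real B ≤ a) {m : ℕ} (hm : 1 ≤ m) :
    ENNReal.ofReal δ ≤ (Measure.pi fun _ : Fin m => μ)
      {r | ∑ j, B.indicator (1 : Ω → ℝ) (r j) < (a + δ) * m} := by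
  set P := Measure.pi fun _ : Fin m => μ with hP
  have hmeas : ∀ j : Fin m, Measurable fun r : Fin m → Ω => B.indicator (1 : Ω → ℝ) (r j) :=
    fun j => (measurable_one.indicator hB).comp (measurable_pi_apply j)
  have hindB : Integrable (B.indicator (1 : Ω → ℝ)) μ :=
    (integrable_indicator_iff hB).2 (integrable_const (1 : ℝ)).integrableOn
  have hindj : ∀ j : Fin m, Integrable (fun r : Fin m → Ω => B.indicator (1 : Ω → ℝ) (r j)) P :=
    fun j => (measurePreserving_eval (fun _ : Fin m => μ) j).integrable_comp_of_integrable hindB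
  have hval : ∫ r, ∑ j, B.indicator (1 : Ω → ℝ) (r j) ∂P = m * μ.real B := by
    rw [integral_finsetSum _ fun j _ => hindj j]
    have : ∀ j : Fin m, ∫ r, B.indicator (1 : Ω → ℝ) (r j) ∂P = μ.real B := by
      intro j
      have h := integral_map (μ := P) (φ := Function.eval j) (f := B.indicator (1 : Ω → ℝ))
        (measurable_pi_apply j).aemeasurable
        (measurable_one.indicator hB).aestronglyMeasurable
      rw [(measurePreserving_eval (fun _ : Fin m => μ) j).map_eq, integral_indicator_one hB] at h
      exact h.symm
    simp [this]
  have hmarkov := mul_meas_ge_le_integral_of_nonneg (μ := P)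
    (f := fun r => ∑ j, B.indicator (1 : Ω → ℝ) (r j))
    (Filter.Eventually.of_forall fun r => Finset.sum_nonneg fun j _ =>
      Set.indicator_nonneg (fun _ _ => zero_le_one) _)
    (integrable_finsetSum _ fun j _ => hindj j) ((a + δ) * m)
  rw [hval] at hmarkov
  have hcompl : {r : Fin m → Ω | (a + δ) * m ≤ ∑ j, B.indicator (1 : Ω → ℝ) (r j)}ᶜ =
      {r | ∑ j, B.indicator (1 : Ω → ℝ) (r j) < (a + δ) * m} := by
    ext r
    simp
  have hms : MeasurableSet
      {r : Fin m → Ω | (a + δ) * m ≤ ∑ j, B.indicator (1 : Ω → ℝ) (r j)} :=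
    measurableSet_le measurable_const (Finset.measurable_sum _ fun j _ => hmeas j)
  have h1 := measureReal_compl (μ := P) hms
  rw [hcompl] at h1
  simp only [probReal_univ] at h1
  rw [← ENNReal.ofReal_toReal (measure_ne_top P _)]
  apply ENNReal.ofReal_le_ofReal
  change δ ≤ P.real _
  rw [h1]
  have hm' : (0 : ℝ) < m := by exact_mod_cast hm
  set p := P.real {r : Fin m → Ω | (a + δ) * m ≤ ∑ j, B.indicator (1 : Ω → ℝ) (r j)}
  have h2 : (a + δ) * p ≤ a := by
    have : m * ((a + δ) * p) ≤ m * a := by nlinarith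
    exact le_of_mul_le_mul_left this hm'
  by_contra hcon
  push Not at hcon
  nlinarith [mul_nonneg hδ.le (sub_nonneg.2 had)]

/-- **Uniform sampling** for a countable family of small measurable sets with few traces on
samples of size `2 * m`. -/
theorem exists_sample {Ω ι : Type*} [MeasurableSpace Ω] [Countable ι] (μ : Measure Ω)
    [IsProbabilityMeasure μ] (B : ι → Set Ω) (hB : ∀ i, MeasurableSet (B i)) {a δ : ℝ}
    (ha : 0 ≤ a) (hδ : 0 < δ) (had : a + δ ≤ 1) (hμ : ∀ i, μ.real (B i) ≤ a) {m : ℕ}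
    (hm : 1 ≤ m) {G : ℕ}
    (hG : ∀ w : Fin m ⊕ Fin m → Ω, (Set.range fun i => {k | w k ∈ B i}).ncard ≤ G)
    (hGm : G * Real.exp (-(δ ^ 2 * m / 2)) < δ) :
    ∃ r : Fin m → Ω, ∀ i, (Set.ncard {j | r j ∈ B i} : ℝ) < (a + 2 * δ) * m := by
  classical
  by_contra hcon
  push Not at hcon
  set g : ι → Ω → ℝ := fun i => (B i).indicator 1 with hgdef
  have hg : ∀ i ω, g i ω = 0 ∨ g i ω = 1 := fun i ω => by
    by_cases h : ω ∈ B i <;> simp [g, h]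
  have hgm : ∀ i, Measurable (g i) := fun i => measurable_one.indicator (hB i)
  have hcount : ∀ i (r : Fin m → Ω), (Set.ncard {j | r j ∈ B i} : ℝ) = ∑ j, g i (r j) := by
    intro i r
    simp only [g, Set.indicator_apply, Pi.one_apply]
    rw [Finset.sum_boole, Set.ncard_eq_toFinset_card']
    simp
  have hA : MeasurableSet
      {w : Fin m → Ω × Ω | ∃ i, δ * m ≤ ∑ j, (g i (w j).1 - g i (w j).2)} := by
    rw [show {w : Fin m → Ω × Ω | ∃ i, δ * m ≤ ∑ j, (g i (w j).1 - g i (w j).2)} =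
      ⋃ i, {w | δ * m ≤ ∑ j, (g i (w j).1 - g i (w j).2)} by ext; simp]
    refine MeasurableSet.iUnion fun i => measurableSet_le measurable_const
      (Finset.measurable_sum _ fun j _ => ?_)
    exact ((hgm i).comp (measurable_fst.comp (measurable_pi_apply j))).sub
      ((hgm i).comp (measurable_snd.comp (measurable_pi_apply j)))
  have hupper := measure_discrepancy_le μ (m := m) (δ := δ) g
    (K := G * Real.exp (-(δ ^ 2 * m / 2))) hA (by
      intro w
      -- The trace on the double sample determines the vector of pairs of indicator values.
      have hfac : (Set.range fun i => fun j : Fin m => (g i (w j).1, g i (w j).2)) =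
          (fun S : Set (Fin m ⊕ Fin m) => fun j : Fin m =>
            (S.indicator (1 : Fin m ⊕ Fin m → ℝ) (Sum.inl j), S.indicator (1 : Fin m ⊕ Fin m → ℝ) (Sum.inr j))) ''
          (Set.range fun i => {k | Sum.elim (fun j => (w j).1) (fun j => (w j).2) k ∈ B i}) := by
        rw [← Set.range_comp]
        congr 1
      have hfin : (Set.range fun i => fun j : Fin m => (g i (w j).1, g i (w j).2)).Finite := by
        rw [hfac]
        exact (Set.toFinite _).image _
      have := card_bad_swaps_le hδ g hg (G := G) w hfin (by
        rw [hfac]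
        exact (Set.ncard_image_le (Set.toFinite _)).trans (hG _))
      linarith)
  have hlower : ENNReal.ofReal δ ≤ (Measure.pi fun _ : Fin m => μ.prod μ)
      {w | ∃ i, δ * m ≤ ∑ j, (g i (w j).1 - g i (w j).2)} := by
    have hmp := measurePreserving_arrowProdEquivProdArrow Ω Ω (Fin m) (fun _ => μ) (fun _ => μ)
    set e := MeasurableEquiv.arrowProdEquivProdArrow Ω Ω (Fin m) with he
    rw [← hmp.symm.measure_preimage hA.nullMeasurableSet,
      Measure.prod_apply (e.symm.measurable hA)]
    calc ENNReal.ofReal δ = ∫⁻ _ : Fin m → Ω, ENNReal.ofReal δ ∂(Measure.pi fun _ => μ) := by simp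
      _ ≤ _ := by
        refine lintegral_mono fun r => ?_
        obtain ⟨i, hi⟩ := hcon r
        refine (measure_few_hits μ (hB i) ha hδ had (hμ i) hm).trans (measure_mono fun r' hr' => ?_)
        refine ⟨i, ?_⟩
        rw [hcount] at hi
        have h1 : ∑ j, (g i (e.symm (r, r') j).1 - g i (e.symm (r, r') j).2) =
            ∑ j, g i (r j) - ∑ j, g i (r' j) := by
          rw [← Finset.sum_sub_distrib]
          rfl
        rw [h1]
        have h2 : ∑ j, g i (r' j) < (a + δ) * m := hr'
        linarith
  have h := hlower.trans hupper
  rw [ENNReal.ofReal_le_ofReal_iff (by positivity)] at h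
  linarith

/-! ### Passing to a finite sample -/

/-- A family of traces that are determined by the signs of polynomials at parameter points is
no larger than the number of sign vectors. -/
theorem ncard_range_le {n : ℕ} {β X Y : Type*} [Fintype β] [Finite Y] {d : ℕ} (hd : 1 ≤ d)
    (f : β → MvPolynomial (Fin n) ℝ) (hf : ∀ i, (f i).totalDegree ≤ d)
    (u : X → Fin n → ℝ) (τ : X → Y)
    (hτ : ∀ x x', (∀ i, Real.sign (eval (u x) (f i)) = Real.sign (eval (u x') (f i))) →
      τ x = τ x') :
    (Set.range τ).ncard ≤ (n + 2 * Fintype.card β).choose n * d ^ n := by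
  classical
  let e := Finite.equivFin (Set.range τ)
  have hc : (Set.range τ).ncard = Nat.card (Set.range τ) := rfl
  rw [hc]
  choose x hx using fun y : Set.range τ => y.2
  refine card_sign_vectors_le hd f hf (fun l => u (x (e.symm l))) fun l l' h => ?_
  have := hτ _ _ h
  rw [hx, hx] at this
  exact e.symm.injective (Subtype.ext this)

/-- The set of points where a Boolean combination `Φ` of strict linear inequalities, with
coefficient vectors `θ a`, holds for the feature vector `ψ r`. -/
def cell {Ω I J : Type*} [Fintype J] (ψ : Ω → J → ℝ) (Φ : (I → Prop) → Prop) (θ : I → J → ℝ) :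
    Set Ω :=
  {r | Φ fun a => 0 < ∑ j, θ a j * ψ r j}

theorem measurableSet_cell {Ω I J : Type*} [MeasurableSpace Ω] [Finite I] [Fintype J]
    {ψ : Ω → J → ℝ} (hψ : ∀ j, Measurable fun r => ψ r j) (Φ : (I → Prop) → Prop)
    (θ : I → J → ℝ) : MeasurableSet (cell ψ Φ θ) := by
  have h1 : Measurable fun r : Ω => fun a : I => 0 < ∑ j, θ a j * ψ r j := by
    refine measurable_pi_lambda _ fun a => ?_
    refine measurableSet_setOfPred.1 (measurableSet_lt measurable_const ?_)
    exact Finset.measurable_sum _ fun j _ => (hψ j).const_mul _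
  exact h1 (Set.toFinite {P : I → Prop | Φ P}).measurableSet

/-- Growth bound for the cells, the coefficients being the variables of linear polynomials. -/
theorem ncard_cell_traces_le {Ω I J X : Type*} [Fintype I] [Fintype J] (ψ : Ω → J → ℝ)
    (Φ : (I → Prop) → Prop) (θ : X → I → J → ℝ) {m : ℕ} (w : Fin m ⊕ Fin m → Ω) :
    (Set.range fun x => {k | w k ∈ cell ψ Φ (θ x)}).ncard ≤
      (Fintype.card (I × J) + 2 * (2 * m * Fintype.card I)).choose (Fintype.card (I × J)) := by
  classical
  let e := Fintype.equivFin (I × J)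
  let f : (Fin m ⊕ Fin m) × I → MvPolynomial (Fin (Fintype.card (I × J))) ℝ :=
    fun p => ∑ j, C (ψ (w p.1) j) * MvPolynomial.X (e (p.2, j))
  have heval : ∀ x p, eval (fun l => θ x (e.symm l).1 (e.symm l).2) (f p) =
      ∑ j, θ x p.2 j * ψ (w p.1) j := by
    intro x p
    simp only [f, map_sum, map_mul, eval_C, eval_X, Equiv.symm_apply_apply]
    exact Finset.sum_congr rfl fun j _ => mul_comm _ _
  have h := ncard_range_le (d := 1) le_rfl f (fun p => ?_)
    (fun x l => θ x (e.symm l).1 (e.symm l).2)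
    (fun x => {k | w k ∈ cell ψ Φ (θ x)}) ?_
  · simpa [two_mul] using h
  · refine totalDegree_finsetSum_le fun j _ => (totalDegree_mul _ _).trans ?_
    simp
  · intro x x' hs
    ext k
    have h1 : (fun a => 0 < ∑ j, θ x a j * ψ (w k) j) =
        fun a => 0 < ∑ j, θ x' a j * ψ (w k) j := by
      funext a
      have h2 := hs (k, a)
      rw [heval, heval] at h2
      apply propext
      have h3 : ∀ y : ℝ, 0 < y ↔ Real.sign y = 1 := by
        intro y
        rcases lt_trichotomy y 0 with h | h | h
        · simp only [Real.sign_of_neg h, not_lt.2 h.le, false_iff]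
          norm_num
        · simp [h]
        · simp [Real.sign_of_pos h, h]
      rw [h3, h3, h2]
    change Φ _ ↔ Φ _
    rw [h1]

theorem exists_large_sample (D c : ℕ) {δ : ℝ} (hδ : 0 < δ) :
    ∃ m : ℕ, 1 ≤ m ∧
      ((D + 2 * (2 * m * c)).choose D : ℝ) * Real.exp (-(δ ^ 2 * m / 2)) < δ := by
  have hlim : Filter.Tendsto (fun m : ℕ => δ ^ 2 * m / 2) Filter.atTop Filter.atTop := by
    have h1 : (fun m : ℕ => δ ^ 2 * m / 2) = fun m : ℕ => (δ ^ 2 / 2) * (m : ℝ) := by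
      funext m
      ring
    rw [h1]
    exact tendsto_natCast_atTop_atTop.const_mul_atTop (by positivity)
  have h2 := ((Real.tendsto_pow_mul_exp_neg_atTop_nhds_zero D).comp hlim).const_mul
    (((D + 4 * c : ℕ) : ℝ) ^ D * (2 / δ ^ 2) ^ D)
  rw [mul_zero] at h2
  obtain ⟨m, hm, hm1⟩ := ((h2.eventually_lt_const hδ).and (Filter.eventually_ge_atTop 1)).exists
  refine ⟨m, hm1, lt_of_le_of_lt ?_ hm⟩
  have h3 : (D + 2 * (2 * m * c)).choose D ≤ ((D + 4 * c) * m) ^ D := by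
    refine (Nat.choose_le_pow _ _).trans (Nat.pow_le_pow_left ?_ D)
    nlinarith
  have h4 : ((D + 2 * (2 * m * c)).choose D : ℝ) ≤ ((D + 4 * c : ℕ) : ℝ) ^ D * (m : ℝ) ^ D := by
    rw [← mul_pow]
    exact_mod_cast h3
  have h5 : ((D + 4 * c : ℕ) : ℝ) ^ D * (2 / δ ^ 2) ^ D *
      ((δ ^ 2 * m / 2) ^ D * Real.exp (-(δ ^ 2 * m / 2))) =
      ((D + 4 * c : ℕ) : ℝ) ^ D * (m : ℝ) ^ D * Real.exp (-(δ ^ 2 * m / 2)) := by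
    have : (2 / δ ^ 2) ^ D * (δ ^ 2 * m / 2) ^ D = (m : ℝ) ^ D := by
      rw [← mul_pow]
      congr 1
      field_simp
    rw [← this]
    ring
  simp only [Function.comp_apply]
  rw [h5]
  gcongr

/-- The features `φ r`, extended by a negative coordinate dominating all of them. Its coefficient
acts as a margin that makes strict inequalities stable under perturbing the other coefficients. -/
def withMargin {Ω J : Type*} [Fintype J] (φ : Ω → J → ℝ) (r : Ω) : Option J → ℝ
  | none => -(1 + ∑ j, |φ r j|)
  | some j => φ r j

/-- Every cell is a pointwise limit of cells from a countable class: the coefficients are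
approximated by rationals and each inequality is tightened by a rational margin. -/
theorem exists_rational_cells {Ω I J : Type*} [Fintype I] [Fintype J] (φ : Ω → J → ℝ)
    (Φ : (I → Prop) → Prop) (v : I → J → ℝ) :
    ∃ θ : ℕ → I → Option J → ℚ, ∀ r, ∀ᶠ k in Filter.atTop,
      (r ∈ cell (withMargin φ) Φ (fun a j => (θ k a j : ℝ)) ↔ r ∈ cell φ Φ v) := by
  have happ : ∀ (k : ℕ) (a : I) (j : J), ∃ q : ℚ, |(q : ℝ) - v a j| < 1 / (2 * ((k : ℝ) + 1)) := by
    intro k a j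
    obtain ⟨q, hq⟩ := exists_rat_near (v a j) (show (0 : ℝ) < 1 / (2 * ((k : ℝ) + 1)) by positivity)
    exact ⟨q, by rwa [abs_sub_comm]⟩
  choose q hq using happ
  refine ⟨fun k a o => Option.elim o (1 / ((k : ℚ) + 1)) (q k a), fun r => ?_⟩
  set W : ℝ := 1 + ∑ j, |φ r j| with hW
  have hW1 : 1 ≤ W := by
    have : 0 ≤ ∑ j, |φ r j| := Finset.sum_nonneg fun _ _ => abs_nonneg _
    linarith
  have hkey : ∀ a, ∀ᶠ k : ℕ in Filter.atTop,
      (0 < ∑ o, ((Option.elim o (1 / ((k : ℚ) + 1)) (q k a) : ℚ) : ℝ) * withMargin φ r o ↔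
        0 < ∑ j, v a j * φ r j) := by
    intro a
    have hsum : ∀ k : ℕ,
        ∑ o, ((Option.elim o (1 / ((k : ℚ) + 1)) (q k a) : ℚ) : ℝ) * withMargin φ r o =
        ∑ j, v a j * φ r j + ∑ j, ((q k a j : ℝ) - v a j) * φ r j - 1 / ((k : ℝ) + 1) * W := by
      intro k
      rw [Fintype.sum_option, ← Finset.sum_add_distrib]
      simp only [withMargin, Option.elim, ← hW]
      push_cast
      have : ∀ j, v a j * φ r j + ((q k a j : ℝ) - v a j) * φ r j = q k a j * φ r j :=
        fun j => by ring
      simp_rw [this]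
      ring
    have herr : ∀ k : ℕ, |∑ j, ((q k a j : ℝ) - v a j) * φ r j| ≤
        1 / (2 * ((k : ℝ) + 1)) * W := by
      intro k
      calc |∑ j, ((q k a j : ℝ) - v a j) * φ r j|
          ≤ ∑ j, |((q k a j : ℝ) - v a j) * φ r j| := Finset.abs_sum_le_sum_abs _ _
        _ ≤ ∑ j, 1 / (2 * ((k : ℝ) + 1)) * |φ r j| := by
            refine Finset.sum_le_sum fun j _ => ?_
            rw [abs_mul]
            exact mul_le_mul_of_nonneg_right (hq k a j).le (abs_nonneg _)
        _ ≤ _ := by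
            rw [← Finset.mul_sum]
            refine mul_le_mul_of_nonneg_left ?_ (by positivity)
            linarith
    have hhalf : ∀ k : ℕ, 1 / (2 * ((k : ℝ) + 1)) = 1 / ((k : ℝ) + 1) / 2 := by
      intro k
      field_simp
    by_cases hpos : 0 < ∑ j, v a j * φ r j
    · have hlim := (tendsto_one_div_add_atTop_nhds_zero_nat (𝕜 := ℝ)).mul_const (2 * W)
      rw [zero_mul] at hlim
      filter_upwards [hlim.eventually_lt_const hpos] with k hk
      simp only [hpos, iff_true]
      rw [hsum]
      have h1 := (abs_le.1 (herr k)).1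
      rw [hhalf] at h1
      have h2 : 0 < 1 / ((k : ℝ) + 1) * W := by positivity
      linarith
    · filter_upwards with k
      simp only [hpos, iff_false, not_lt]
      rw [hsum]
      have h1 := (abs_le.1 (herr k)).2
      rw [hhalf] at h1
      have h2 : 0 < 1 / ((k : ℝ) + 1) * W := by positivity
      linarith
  filter_upwards [Filter.eventually_all.2 hkey] with k hk
  change Φ _ ↔ Φ _
  rw [iff_iff_eq]
  congr 1
  funext a
  exact propext (hk a)

/-- A measure may be replaced by a finite sample, simultaneously for all cells of measure at
most `1/3`. The size of the sample is not controlled. -/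
theorem exists_finite_sample {Ω I J X : Type*} [MeasurableSpace Ω] [Fintype I] [Fintype J]
    (μ : Measure Ω) [IsProbabilityMeasure μ] (φ : Ω → J → ℝ)
    (hφ : ∀ j, Measurable fun r => φ r j) (Φ : (I → Prop) → Prop) (v : X → I → J → ℝ)
    (hv : ∀ x, μ.real (cell φ Φ (v x)) ≤ 1 / 3) :
    ∃ m : ℕ, 1 ≤ m ∧ ∃ R : Fin m → Ω, ∀ x,
      (Set.ncard {j | R j ∈ cell φ Φ (v x)} : ℝ) ≤ 2 / 5 * m := by
  have hψ : ∀ o, Measurable fun r => withMargin φ r o := by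
    rintro (_ | j)
    · exact (measurable_const.add (Finset.measurable_sum _ fun j _ =>
        continuous_abs.measurable.comp (hφ j))).neg
    · exact hφ j
  have hmeas := fun θ : I → Option J → ℝ => measurableSet_cell hψ Φ θ
  obtain ⟨m, hm, hGm⟩ := exists_large_sample (Fintype.card (I × Option J)) (Fintype.card I)
    (δ := 1 / 50) (by norm_num)
  let ι := {θ : I → Option J → ℚ //
    μ.real (cell (withMargin φ) Φ fun a j => (θ a j : ℝ)) ≤ 7 / 20}
  obtain ⟨R, hR⟩ := exists_sample (ι := ι) μ
    (fun θ => cell (withMargin φ) Φ fun a j => (θ.1 a j : ℝ)) (fun θ => hmeas _)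
    (a := 7 / 20) (δ := 1 / 50) (by norm_num) (by norm_num) (by norm_num) (fun θ => θ.2) hm
    (fun w => ncard_cell_traces_le (withMargin φ) Φ (fun θ : ι => fun a j => (θ.1 a j : ℝ)) w) hGm
  refine ⟨m, hm, R, fun x => ?_⟩
  obtain ⟨θ, hθ⟩ := exists_rational_cells φ Φ (v x)
  have hlim := tendsto_measure_of_tendsto_indicator_of_isFiniteMeasure (L := Filter.atTop) μ
    (As := fun k => cell (withMargin φ) Φ fun a j => (θ k a j : ℝ)) (A := cell φ Φ (v x))
    (fun k => hmeas _) hθ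
  have hlim' := (ENNReal.tendsto_toReal (measure_ne_top μ _)).comp hlim
  have hlt : μ.real (cell φ Φ (v x)) < 7 / 20 := (hv x).trans_lt (by norm_num)
  obtain ⟨k, hk1, hk2⟩ := ((hlim'.eventually_lt_const hlt).and
    (Filter.eventually_all.2 fun j : Fin m => hθ (R j))).exists
  have h1 := hR ⟨θ k, le_of_lt hk1⟩
  have h2 : {j | R j ∈ cell (withMargin φ) Φ fun a j => (θ k a j : ℝ)} =
      {j | R j ∈ cell φ Φ (v x)} := by
    ext j
    exact hk2 j
  simp only [h2] at h1
  refine h1.le.trans ?_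
  gcongr
  norm_num

/-! ### Semialgebraic matrices -/

/-- Evaluating a polynomial in `n + k` variables at `(x, r)` is a linear functional of the
monomials in `r`, with coefficients depending on `x`. -/
theorem eval_append {n k : ℕ} (g : MvPolynomial (Fin (n + k)) ℝ) (S : Finset (Fin (n + k) →₀ ℕ))
    (hS : g.support ⊆ S) (x : Fin n → ℝ) (r : Fin k → ℝ) :
    eval (Fin.append x r) g =
      ∑ d : S, (coeff d.1 g * ∏ i, x i ^ d.1 (Fin.castAdd k i)) *
        ∏ j, r j ^ d.1 (Fin.natAdd n j) := by
  rw [eval_eq', Finset.sum_coe_sort S fun d => (coeff d g * ∏ i, x i ^ d (Fin.castAdd k i)) *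
        ∏ j, r j ^ d (Fin.natAdd n j)]
  rw [← Finset.sum_subset hS]
  · refine Finset.sum_congr rfl fun d _ => ?_
    rw [Fin.prod_univ_add]
    simp [mul_assoc]
  · intro d _ hd
    simp [notMem_support_iff.1 hd]

/-- The probability measure of the majority hypothesis can be replaced by a finite sample. -/
theorem exists_finite_columns {n k : ℕ} {M : (Fin n → ℝ) → (Fin k → ℝ) → Bool}
    (hM : IsSemialgebraic (n + k)
      {w : Fin (n + k) → ℝ |
        M (fun i => w (Fin.castAdd k i)) (fun j => w (Fin.natAdd n j)) = true})
    (T : Set (Fin n → ℝ)) (μ : Measure (Fin k → ℝ)) [IsProbabilityMeasure μ]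
    (hT : ∀ x ∈ T, 2 / 3 ≤ μ {r : Fin k → ℝ | M x r = true}) :
    ∃ m : ℕ, 1 ≤ m ∧ ∃ R : Fin m → (Fin k → ℝ), ∀ x ∈ T,
      (Set.ncard {j | ¬ M x (R j) = true} : ℝ) ≤ 2 / 5 * m := by
  classical
  obtain ⟨c, p, l, q, hpq⟩ := hM
  -- The atoms are `p i > 0`, `-p i > 0` and `q i j > 0`.
  let g : (Fin c ⊕ Fin c) ⊕ (Σ i : Fin c, Fin (l i)) → MvPolynomial (Fin (n + k)) ℝ :=
    Sum.elim (Sum.elim p fun i => -p i) fun ij => q ij.1 ij.2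
  let Φ : ((Fin c ⊕ Fin c) ⊕ (Σ i : Fin c, Fin (l i)) → Prop) → Prop := fun P =>
    ¬ ∃ i, (¬ P (.inl (.inl i)) ∧ ¬ P (.inl (.inr i))) ∧ ∀ j, P (.inr ⟨i, j⟩)
  let S : Finset (Fin (n + k) →₀ ℕ) := Finset.univ.biUnion fun a => (g a).support
  let φ : (Fin k → ℝ) → S → ℝ := fun r d => ∏ j, r j ^ d.1 (Fin.natAdd n j)
  let v : (Fin n → ℝ) → (Fin c ⊕ Fin c) ⊕ (Σ i : Fin c, Fin (l i)) → S → ℝ := fun x a d =>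
    coeff d.1 (g a) * ∏ i, x i ^ d.1 (Fin.castAdd k i)
  have hφ : ∀ d, Measurable fun r => φ r d := fun d =>
    Finset.measurable_prod _ fun j _ => (measurable_pi_apply j).pow_const _
  have hval : ∀ x r a, ∑ d, v x a d * φ r d = eval (Fin.append x r) (g a) := fun x r a =>
    (eval_append (g a) S (Finset.subset_biUnion_of_mem (fun a => (g a).support)
      (Finset.mem_univ a)) x r).symm
  have hcell : ∀ x, {r | ¬ M x r = true} = cell φ Φ (v x) := by
    intro x
    ext r
    have h1 : M x r = true ↔ Fin.append x r ∈ {w : Fin (n + k) → ℝ |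
        M (fun i => w (Fin.castAdd k i)) (fun j => w (Fin.natAdd n j)) = true} := by
      simp
    change ¬ _ ↔ Φ fun a => 0 < ∑ d, v x a d * φ r d
    rw [h1, hpq]
    simp only [hval, Φ, g, Sum.elim_inl, Sum.elim_inr, map_neg, Set.mem_iUnion]
    refine not_congr (exists_congr fun i => and_congr_left' ?_)
    constructor
    · intro h
      simp [h]
    · rintro ⟨h2, h3⟩
      linarith
  obtain ⟨m, hm, R, hR⟩ := exists_finite_sample μ φ hφ Φ (fun x : T => v x) (by
    rintro ⟨x, hx⟩
    have hms := measurableSet_cell hφ Φ (v x)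
    have h2 : (cell φ Φ (v x))ᶜ = {r | M x r = true} := by
      rw [← hcell]
      ext r
      simp
    have h3 := measureReal_compl (μ := μ) hms
    rw [h2, probReal_univ] at h3
    have h4 := ENNReal.toReal_mono (measure_ne_top μ _) (hT x hx)
    change _ ≤ μ.real {r | M x r = true} at h4
    rw [ENNReal.toReal_div] at h4
    norm_num at h4
    change μ.real (cell φ Φ (v x)) ≤ 1 / 3
    linarith)
  refine ⟨m, hm, R, fun x hx => ?_⟩
  have h5 := hR ⟨x, hx⟩
  simp only [← hcell x] at h5
  exact h5

/-- With `L` an integer exceeding `ln t`, samples of size `16000 * n * L` are large enough for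
the uniform sampling lemma with `δ = 1/20`. -/
theorem growth_lt {n t L s m : ℕ} (hn : 1 ≤ n) (ht : 1 ≤ t) (hL : 1 + Real.log t ≤ L)
    (hm : m = 16000 * n * L) (hs : s ≤ 2 * m * t) :
    (((n + 2 * s).choose n * t ^ n : ℕ) : ℝ) * Real.exp (-((1 / 20 : ℝ) ^ 2 * m / 2)) < 1 / 20 := by
  have ht0 : (0 : ℝ) < t := by exact_mod_cast ht
  have hlog : 0 ≤ Real.log t := Real.log_nonneg (by exact_mod_cast ht)
  have hL1 : (1 : ℝ) ≤ L := by linarith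
  have hn1 : (1 : ℝ) ≤ n := by exact_mod_cast hn
  have ht1 : (1 : ℝ) ≤ t := by exact_mod_cast ht
  have htexp : (t : ℝ) ≤ Real.exp (L - 1) := by
    rw [← Real.log_le_iff_le_exp ht0]
    linarith
  have hLexp : (L : ℝ) ≤ Real.exp (L - 1) := by
    have := Real.add_one_le_exp ((L : ℝ) - 1)
    linarith
  have h12 : (80000 : ℝ) ≤ Real.exp 12 := by
    have h1 : Real.exp 12 = Real.exp 1 ^ 12 := by
      rw [← Real.exp_nat_mul]
      norm_num
    rw [h1]
    calc (80000 : ℝ) ≤ (2.7 : ℝ) ^ 12 := by norm_num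
      _ ≤ _ := pow_le_pow_left₀ (by norm_num) (by linarith [Real.exp_one_gt_d9]) 12
  have hbase : ((n + 2 * s : ℕ) : ℝ) ≤ n * (80000 * L * t) := by
    have h1 : (s : ℝ) ≤ 2 * m * t := by exact_mod_cast hs
    have h2 : (m : ℝ) = 16000 * n * L := by exact_mod_cast hm
    rw [h2] at h1
    push_cast
    have h3 : (n : ℝ) ≤ n * (L * t) := by
      have : (1 : ℝ) ≤ L * t := by nlinarith
      nlinarith
    nlinarith
  have hchoose : ((n + 2 * s).choose n : ℝ) ≤ Real.exp n * (80000 * L * t) ^ n := by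
    calc ((n + 2 * s).choose n : ℝ) ≤ ((n + 2 * s : ℕ) : ℝ) ^ n / (n.factorial : ℝ) :=
          Nat.choose_le_pow_div n (n + 2 * s)
      _ ≤ (n * (80000 * L * t)) ^ n / (n.factorial : ℝ) := by gcongr
      _ = (n : ℝ) ^ n / (n.factorial : ℝ) * (80000 * L * t) ^ n := by
          rw [mul_pow]
          ring
      _ ≤ _ := by
          gcongr
          exact Real.pow_div_factorial_le_exp (n : ℝ) (by positivity) n
  have hG : (((n + 2 * s).choose n * t ^ n : ℕ) : ℝ) ≤ Real.exp (13 * n * L) := by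
    push_cast
    calc ((n + 2 * s).choose n : ℝ) * (t : ℝ) ^ n
        ≤ Real.exp n * (80000 * L * t) ^ n * t ^ n := by gcongr
      _ ≤ Real.exp n * (Real.exp 12 * Real.exp (L - 1) * Real.exp (L - 1)) ^ n *
            Real.exp (L - 1) ^ n := by gcongr
      _ = Real.exp (n + n * (12 + (L - 1) + (L - 1)) + n * (L - 1)) := by
          rw [Real.exp_add, Real.exp_add, Real.exp_nat_mul, Real.exp_nat_mul, Real.exp_add,
            Real.exp_add]
      _ ≤ _ := by
          apply Real.exp_le_exp.2
          nlinarith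
  calc (((n + 2 * s).choose n * t ^ n : ℕ) : ℝ) * Real.exp (-((1 / 20 : ℝ) ^ 2 * m / 2))
      ≤ Real.exp (13 * n * L) * Real.exp (-((1 / 20 : ℝ) ^ 2 * m / 2)) := by gcongr
    _ = Real.exp (-(7 * n * L)) := by
        rw [← Real.exp_add, hm]
        congr 1
        push_cast
        ring
    _ ≤ Real.exp (-7) := by
        apply Real.exp_le_exp.2
        nlinarith
    _ < 1 / 20 := by
        have h1 : Real.exp (-7) = (Real.exp 1 ^ 7)⁻¹ := by
          rw [← Real.exp_nat_mul, ← Real.exp_neg]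
          norm_num
        rw [h1, one_div]
        apply inv_strictAnti₀ (by norm_num)
        calc (20 : ℝ) < 2 ^ 7 := by norm_num
          _ ≤ _ := pow_le_pow_left₀ (by norm_num) (by linarith [Real.exp_one_gt_d9]) 7

/-- Traces of the rows on finitely many `t`-semialgebraic columns are few. -/
theorem ncard_row_traces_le {n t m : ℕ} {Ω : Type*} (ht : 1 ≤ t) (M : (Fin n → ℝ) → Ω → Bool)
    (hcol : ∀ r, IsTSemialgebraic n t {x : Fin n → ℝ | M x r = true}) (T : Set (Fin n → ℝ))
    (w : Fin m ⊕ Fin m → Ω) :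
    ∃ s ≤ 2 * m * t,
      (Set.range fun x : T => {κ | ¬ M x (w κ) = true}).ncard ≤ (n + 2 * s).choose n * t ^ n := by
  choose c p hc hdeg hsep using hcol
  refine ⟨Fintype.card (Σ κ, Fin (c (w κ))), ?_, ?_⟩
  · rw [Fintype.card_sigma]
    calc ∑ κ, Fintype.card (Fin (c (w κ))) ≤ ∑ _κ : Fin m ⊕ Fin m, t :=
          Finset.sum_le_sum fun κ _ => by simpa using hc (w κ)
      _ = 2 * m * t := by
          simp [two_mul]
  · refine ncard_range_le ht (fun b : Σ κ, Fin (c (w κ)) => p (w b.1) b.2)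
      (fun b => hdeg _ _) (fun x : T => x.1) _ fun x x' h => ?_
    ext κ
    have h1 : (fun i => Real.sign (eval x.1 (p (w κ) i))) =
        fun i => Real.sign (eval x'.1 (p (w κ) i)) := funext fun i => h ⟨κ, i⟩
    have h2 : M x (w κ) = true ↔ M x' (w κ) = true := by
      constructor
      · intro h3
        by_contra h4
        exact hsep (w κ) x h3 x' h4 h1
      · intro h3
        by_contra h4
        exact hsep (w κ) x' h3 x h4 h1.symm
    exact not_congr h2

/-- Sampling from a finite list of columns: the number of columns needed depends only on the
number of row variables and the complexity of the columns. -/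
theorem exists_majority {n k t L m m' : ℕ} (hn : 1 ≤ n) (ht : 1 ≤ t) (hL : 1 + Real.log t ≤ L)
    (hm : m = 16000 * n * L) (hm' : 1 ≤ m') (M : (Fin n → ℝ) → (Fin k → ℝ) → Bool)
    (hcol : ∀ r : Fin k → ℝ, IsTSemialgebraic n t {x : Fin n → ℝ | M x r = true})
    (T : Set (Fin n → ℝ)) (R : Fin m' → Fin k → ℝ)
    (hR : ∀ x ∈ T, (Set.ncard {j | ¬ M x (R j) = true} : ℝ) ≤ 2 / 5 * m') :
    ∃ r : Fin m → (Fin k → ℝ), ∀ x ∈ T, m < 2 * Set.ncard {i : Fin m | M x (r i) = true} := by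
  classical
  have : Nonempty (Fin m') := ⟨⟨0, hm'⟩⟩
  have hlog : 0 ≤ Real.log t := Real.log_nonneg (by exact_mod_cast ht)
  have hL1 : 1 ≤ L := by
    have : (1 : ℝ) ≤ L := by linarith
    exact_mod_cast this
  have hm1 : 1 ≤ m := by
    rw [hm]
    nlinarith
  -- The uniform distribution on the columns of the finite list.
  let ν : Measure (Fin m') := ProbabilityTheory.uniformOn Set.univ
  have : IsProbabilityMeasure ν :=
    ProbabilityTheory.isProbabilityMeasure_uniformOn Set.finite_univ Set.univ_nonempty
  have hm0 : (0 : ℝ) < m' := by exact_mod_cast hm'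
  have hν : ∀ S : Set (Fin m'), ν.real S = S.ncard / m' := by
    intro S
    have h1 : ν S = Measure.count S / Fintype.card (Fin m') := ProbabilityTheory.uniformOn_univ
    rw [Measure.real, h1, ENNReal.toReal_div, Measure.count_apply (Set.toFinite S).measurableSet]
    rw [← (Set.toFinite S).cast_ncard_eq, ENat.toENNReal_coe, ENNReal.toReal_natCast,
      ENNReal.toReal_natCast, Fintype.card_fin]
  let ι := Set.range fun x : T => {j | ¬ M x (R j) = true}
  obtain ⟨r, hr⟩ := exists_sample (ι := ι) ν (fun S => S.1)
    (fun S => (Set.toFinite _).measurableSet) (a := 2 / 5) (δ := 1 / 20) (by norm_num)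
    (by norm_num) (by norm_num) (by
      rintro ⟨_, ⟨x, rfl⟩⟩
      rw [hν, div_le_iff₀ hm0]
      exact hR x x.2) hm1 (G := (n + 2 * (2 * m * t)).choose n * t ^ n) (by
      intro w
      obtain ⟨s, hs, hle⟩ := ncard_row_traces_le ht M hcol T fun κ => R (w κ)
      have h1 : (Set.range fun S : ι => {κ | w κ ∈ S.1}) =
          Set.range fun x : T => {κ | ¬ M x (R (w κ)) = true} := by
        ext Z
        constructor
        · rintro ⟨⟨_, ⟨x, rfl⟩⟩, rfl⟩
          exact ⟨x, rfl⟩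
        · rintro ⟨x, rfl⟩
          exact ⟨⟨_, ⟨x, rfl⟩⟩, rfl⟩
      rw [h1]
      refine hle.trans (Nat.mul_le_mul_right _ (Nat.choose_le_choose n ?_))
      omega) (growth_lt hn ht hL hm le_rfl)
  refine ⟨fun i => R (r i), fun x hx => ?_⟩
  have h2 := hr ⟨_, ⟨⟨x, hx⟩, rfl⟩⟩
  have h3 : Set.ncard {i : Fin m | M x (R (r i)) = true} +
      Set.ncard {i : Fin m | ¬ M x (R (r i)) = true} = m := by
    have := Set.ncard_add_ncard_compl {i : Fin m | M x (R (r i)) = true}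
    rw [Nat.card_fin] at this
    exact this
  have h4 : (Set.ncard {i : Fin m | ¬ M x (R (r i)) = true} : ℝ) < 1 / 2 * m := by
    refine lt_of_lt_of_eq h2 ?_
    norm_num
  have h5 : 2 * Set.ncard {i : Fin m | ¬ M x (R (r i)) = true} < m := by
    have : (2 : ℝ) * Set.ncard {i : Fin m | ¬ M x (R (r i)) = true} < m := by linarith
    exact_mod_cast this
  simp only
  omega

end InfiniteMajority

/-- **Infinite majority rule.** There is an absolute constant `C > 0` such that: for any
semialgebraic Boolean matrix `M : ℝⁿ × ℝᵏ → {0,1}` all of whose columns are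
`t`-semialgebraic, any set `T ⊆ ℝⁿ` of rows, and any Borel probability measure `μ` on `ℝᵏ`
with `μ{r : M[x,r] = 1} ≥ 2/3` for every `x ∈ T`, there are `m` columns,
`n ≤ m ≤ C·n·(1 + ln t)`, such that every row `x ∈ T` has strictly more than `m/2` ones in
these columns. -/
theorem infinite_majority_rule :
    ∃ C : ℝ, 0 < C ∧
      ∀ (n k t : ℕ), 1 ≤ n → 1 ≤ k → 1 ≤ t →
        ∀ M : (Fin n → ℝ) → (Fin k → ℝ) → Bool,
          IsSemialgebraic (n + k)
            {w : Fin (n + k) → ℝ |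
              M (fun i => w (Fin.castAdd k i)) (fun j => w (Fin.natAdd n j)) = true} →
          (∀ r : Fin k → ℝ, IsTSemialgebraic n t {x : Fin n → ℝ | M x r = true}) →
          ∀ (T : Set (Fin n → ℝ)) (μ : Measure (Fin k → ℝ)),
            IsProbabilityMeasure μ →
            (∀ x ∈ T, 2 / 3 ≤ μ {r : Fin k → ℝ | M x r = true}) →
            ∃ m : ℕ, n ≤ m ∧ (m : ℝ) ≤ C * n * (1 + Real.log t) ∧
              ∃ r : Fin m → (Fin k → ℝ), ∀ x ∈ T,
                m < 2 * Set.ncard {i : Fin m | M x (r i) = true} := by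
  refine ⟨32000, by norm_num, ?_⟩
  intro n k t hn _ ht M hM hcol T μ hμ hT
  obtain ⟨m', hm', R, hR⟩ := InfiniteMajority.exists_finite_columns hM T μ hT
  have hlog : 0 ≤ Real.log t := Real.log_nonneg (by exact_mod_cast ht)
  have hL : 1 + Real.log t ≤ (⌈1 + Real.log t⌉₊ : ℝ) := Nat.le_ceil _
  have hL' : (⌈1 + Real.log t⌉₊ : ℝ) < 1 + Real.log t + 1 := Nat.ceil_lt_add_one (by linarith)
  have hL1 : 1 ≤ ⌈1 + Real.log t⌉₊ := by
    have : (1 : ℝ) ≤ (⌈1 + Real.log t⌉₊ : ℝ) := by linarith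
    exact_mod_cast this
  refine ⟨16000 * n * ⌈1 + Real.log t⌉₊, by nlinarith, ?_,
    InfiniteMajority.exists_majority hn ht hL rfl hm' M hcol T R hR⟩
  have hn0 : (1 : ℝ) ≤ n := by exact_mod_cast hn
  push_cast
  have h1 : (⌈1 + Real.log t⌉₊ : ℝ) ≤ 2 * (1 + Real.log t) := by linarith
  calc (16000 : ℝ) * n * ⌈1 + Real.log t⌉₊ ≤ 16000 * n * (2 * (1 + Real.log t)) := by gcongr
    _ = _ := by ring
end
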